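/- arXiv:2505.14863 — 4 statements merged into one kernel-verified Lean document; each statement's English description precedes it below -/
import Mathlib

section
/- Sharp function of the Riesz potential (Adams): Let d ≥ 1 and 0 < α < d. There is a constant N = N(d,α) such that for every measurable f ≥ 0 on ℝ^d for which R_α f is locally Lebesgue integrable, and every x ∈ ℝ^d, one has (R_α f)^{♯}(x) ≤ N 𝕄_α f(x). -/
/-!
Fix a ball `B = ball c r` containing `x`, put `u = R_α f`, `M = 𝕄_α f(x)` and `ω = |ball 0 1|`.
Split the integral defining `u` at the boundary of `ball c (2r)`.

* The far kernels at two points `y, z ∈ B` differ by at most `C r |w - c|^{α-d-1}` (mean value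
  theorem). Summing over dyadic balls around `c` and using `∫_{ball c R} f ≤ ω R^{d-α} M`, the far
  parts of `u y` and `u z` differ by at most `C M`, a geometric series.
* The near part `h` has average over `B` at most `C M`, by Tonelli and
  `∫_{ball w R} |y - w|^{α-d} dy ≤ C R^α`, which again follows from a dyadic decomposition.

Hence `u y ≤ u z + h y + C M` on `B`. This one-sided bound (with its symmetric counterpart)
controls the mean oscillation of `u` over `B` by twice the average of `h` plus `C M`. Estimates are
carried out in `ℝ≥0∞`, so `M = ∞` needs no separate treatment.
-/

open MeasureTheory ENNReal Metric

noncomputable section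

/-- The Riesz potential `R_α f(x) = ∫ |x−y|^{α−d} f(y) dy` of a nonnegative function,
computed in `ℝ≥0∞`. -/
def rieszPot (d : ℕ) (α : ℝ) (f : EuclideanSpace ℝ (Fin d) → ℝ)
    (x : EuclideanSpace ℝ (Fin d)) : ℝ≥0∞ :=
  ∫⁻ y, ENNReal.ofReal (‖x - y‖ ^ (α - d)) * ENNReal.ofReal (f y)

/-- The sharp function `g^{♯}(x) = sup { ⨍_B |g − g_B| dy : B an open ball containing x }`. -/
def sharpFn (d : ℕ) (g : EuclideanSpace ℝ (Fin d) → ℝ)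
    (x : EuclideanSpace ℝ (Fin d)) : ℝ≥0∞ :=
  ⨆ (c : EuclideanSpace ℝ (Fin d)) (r : ℝ) (_ : 0 < r) (_ : x ∈ ball c r),
    (volume (ball c r))⁻¹ *
      ∫⁻ y in ball c r, ENNReal.ofReal |g y - ⨍ z in ball c r, g z| ∂volume

/-- The fractional maximal function
`𝕄_β f(x) = sup { r^β ⨍_B |f| dy : B an open ball of radius r containing x }`. -/
def fracMax (d : ℕ) (β : ℝ) (f : EuclideanSpace ℝ (Fin d) → ℝ)
    (x : EuclideanSpace ℝ (Fin d)) : ℝ≥0∞ :=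
  ⨆ (c : EuclideanSpace ℝ (Fin d)) (r : ℝ) (_ : 0 < r) (_ : x ∈ ball c r),
    ENNReal.ofReal (r ^ β) *
      ((volume (ball c r))⁻¹ * ∫⁻ y in ball c r, ENNReal.ofReal (f y) ∂volume)

/-! ### Mean oscillation and elementary estimates -/

/-- If `u y ≤ u z + (h y + F)` for almost all pairs, then the mean oscillation of `u` is at most
`2 ∫ h + F`. -/
lemma mean_oscillation_le {X : Type*} [MeasurableSpace X] (ν : Measure X)
    [IsProbabilityMeasure ν] (u h : X → ℝ≥0∞) (hu : Measurable u) (hh : Measurable h)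
    (hfin : ∫⁻ y, u y ∂ν ≠ ⊤) (F : ℝ≥0∞)
    (H : ∀ᵐ y ∂ν, ∀ᵐ z ∂ν, u y ≤ u z + (h y + F) ∧ u z ≤ u y + (h z + F)) :
    ∫⁻ y, ENNReal.ofReal |(u y).toReal - ∫ z, (u z).toReal ∂ν| ∂ν ≤ 2 * ∫⁻ y, h y ∂ν + F := by
  have hu_ae : ∀ᵐ y ∂ν, u y < ⊤ := ae_lt_top hu hfin
  have hint : Integrable (fun z => (u z).toReal) ν :=
    integrable_toReal_of_lintegral_ne_top hu.aemeasurable hfin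
  have key : ∀ᵐ y ∂ν, ENNReal.ofReal |(u y).toReal - ∫ z, (u z).toReal ∂ν| ≤
      h y + (∫⁻ z, h z ∂ν + F) := by
    filter_upwards [H, hu_ae] with y hy huy
    have e : (u y).toReal - ∫ z, (u z).toReal ∂ν = ∫ z, ((u y).toReal - (u z).toReal) ∂ν := by
      rw [integral_sub (integrable_const _) hint]; simp
    rw [e, ← Real.norm_eq_abs, ofReal_norm]
    refine (enorm_integral_le_lintegral_enorm _).trans ?_
    have : ∫⁻ z, ‖(u y).toReal - (u z).toReal‖ₑ ∂ν ≤ ∫⁻ z, (h y + (h z + F)) ∂ν := by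
      refine lintegral_mono_ae ?_
      filter_upwards [hy, hu_ae] with z hz huz
      by_cases hD : h y + (h z + F) = ⊤
      · rw [hD]; exact le_top
      rw [← ofReal_norm, Real.norm_eq_abs]
      apply ENNReal.ofReal_le_of_le_toReal
      have h1 : u y ≤ u z + (h y + (h z + F)) :=
        hz.1.trans (add_le_add_right (add_le_add_right (le_add_self : F ≤ h z + F) _) _)
      have h2 : u z ≤ u y + (h y + (h z + F)) :=
        hz.2.trans (add_le_add_right (le_add_self : h z + F ≤ h y + (h z + F)) _)
      have h1' := ENNReal.toReal_mono (ENNReal.add_ne_top.2 ⟨huz.ne, hD⟩) h1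
      have h2' := ENNReal.toReal_mono (ENNReal.add_ne_top.2 ⟨huy.ne, hD⟩) h2
      rw [ENNReal.toReal_add huz.ne hD] at h1'
      rw [ENNReal.toReal_add huy.ne hD] at h2'
      rw [abs_le]; constructor <;> linarith
    refine this.trans (le_of_eq ?_)
    rw [lintegral_add_left measurable_const, lintegral_add_left hh]
    simp
  refine (lintegral_mono_ae key).trans (le_of_eq ?_)
  rw [lintegral_add_left hh]
  simp
  ring

lemma abs_rpow_neg_sub_le {p m a b : ℝ} (hp : 0 < p) (hm : 0 < m) (ha : m ≤ a) (hb : m ≤ b) :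
    |a ^ (-p) - b ^ (-p)| ≤ p * m ^ (-p - 1) * |a - b| := by
  have := (convex_Ici m).norm_image_sub_le_of_norm_hasDerivWithin_le
    (f := fun t : ℝ => t ^ (-p)) (f' := fun t => -p * t ^ (-p - 1)) (C := p * m ^ (-p - 1))
    (x := b) (y := a) ?_ ?_ hb ha
  · simpa [Real.norm_eq_abs] using this
  · intro t ht
    have : 0 < t := hm.trans_le ht
    exact (Real.hasDerivAt_rpow_const (Or.inl this.ne')).hasDerivWithinAt
  · intro t ht
    have h0 : 0 < t := hm.trans_le ht
    rw [norm_mul, norm_neg, Real.norm_of_nonneg hp.le,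
      Real.norm_of_nonneg (Real.rpow_nonneg h0.le _)]
    exact mul_le_mul_of_nonneg_left
      (Real.rpow_le_rpow_of_nonpos hm ht (by linarith)) hp.le

lemma tsum_ofReal_geometric_lt_top {A q : ℝ} (hq0 : 0 ≤ q) (hq : q < 1) :
    ∑' n : ℕ, ENNReal.ofReal (A * q ^ n) < ⊤ :=
  ((summable_geometric_of_lt_one hq0 hq).mul_left A).tsum_ofReal_lt_top

/-! ### Dyadic bounds for the kernel and for the mass of the density -/

section

variable {d : ℕ}

/-- The growth bound `∫_{ball c R} f ≤ ω R^{d-α} 𝕄_α f(x)`, where `ω` is the volume of the unit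
ball. -/
lemma lintegral_ball_le_fracMax {α : ℝ} (f : EuclideanSpace ℝ (Fin d) → ℝ)
    {c x : EuclideanSpace ℝ (Fin d)} {R : ℝ} (hR : 0 < R) (hx : x ∈ ball c R) :
    ∫⁻ y in ball c R, ENNReal.ofReal (f y) ≤
      ENNReal.ofReal (R ^ ((d : ℝ) - α)) *
        (volume (ball (0 : EuclideanSpace ℝ (Fin d)) 1) * fracMax d α f x) := by
  have h1 : ENNReal.ofReal (R ^ α) * ((volume (ball c R))⁻¹ *
      ∫⁻ y in ball c R, ENNReal.ofReal (f y)) ≤ fracMax d α f x :=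
    le_iSup_of_le c (le_iSup_of_le R (le_iSup_of_le hR (le_iSup_of_le hx le_rfl)))
  have hv : volume (ball c R) = ENNReal.ofReal (R ^ ((d : ℝ) - α)) * ENNReal.ofReal (R ^ α) *
      volume (ball (0 : EuclideanSpace ℝ (Fin d)) 1) := by
    rw [Measure.addHaar_ball_of_pos _ _ hR, ← ENNReal.ofReal_mul (by positivity),
      ← Real.rpow_add hR]
    simp
  have hv0 : volume (ball c R) ≠ 0 := (measure_ball_pos _ _ hR).ne'
  have hvt : volume (ball c R) ≠ ⊤ := measure_ball_lt_top.ne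
  calc ∫⁻ y in ball c R, ENNReal.ofReal (f y)
      = volume (ball c R) * ((volume (ball c R))⁻¹ * ∫⁻ y in ball c R, ENNReal.ofReal (f y)) := by
        rw [← mul_assoc, ENNReal.mul_inv_cancel hv0 hvt, one_mul]
    _ = ENNReal.ofReal (R ^ ((d : ℝ) - α)) * (volume (ball (0 : EuclideanSpace ℝ (Fin d)) 1) *
        (ENNReal.ofReal (R ^ α) * ((volume (ball c R))⁻¹ *
          ∫⁻ y in ball c R, ENNReal.ofReal (f y)))) := by
        nth_rewrite 1 [hv]; ring
    _ ≤ _ := by gcongr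

/-- The Riesz kernel is integrable on balls, with the homogeneous bound `C R^α`. -/
lemma lintegral_ball_kernel_le {α : ℝ} (hα0 : 0 < α) (hαd : α < d) :
    ∃ C : ℝ≥0∞, C ≠ ⊤ ∧ ∀ (w : EuclideanSpace ℝ (Fin d)) (R : ℝ), 0 < R →
      ∫⁻ y in ball w R, ENNReal.ofReal (‖y - w‖ ^ (α - d)) ≤ C * ENNReal.ofReal (R ^ α) := by
  set q : ℝ := (1 / 2 : ℝ) ^ α with hq
  have hq0 : 0 ≤ q := by positivity
  have hq1 : q < 1 := Real.rpow_lt_one (by norm_num) (by norm_num) hα0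
  set A : ℝ := (1 / 2 : ℝ) ^ (α - d) with hA
  set ω := volume (ball (0 : EuclideanSpace ℝ (Fin d)) 1) with hω
  refine ⟨(∑' n : ℕ, ENNReal.ofReal (A * q ^ n)) * ω,
    ENNReal.mul_ne_top (tsum_ofReal_geometric_lt_top hq0 hq1).ne
      measure_ball_lt_top.ne, fun w R hR => ?_⟩
  -- dyadic majorant of the kernel
  let φ : ℕ → EuclideanSpace ℝ (Fin d) → ℝ≥0∞ := fun n =>
    (closedBall w ((1 / 2) ^ n * R)).indicator
      (fun _ => ENNReal.ofReal (((1 / 2) ^ (n + 1) * R) ^ (α - d)))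
  have hpt : ∀ y ∈ ball w R, ENNReal.ofReal (‖y - w‖ ^ (α - d)) ≤ ∑' n, φ n y := by
    intro y hy
    have hy' : ‖y - w‖ < R := by simpa [dist_eq_norm] using hy
    rcases (norm_nonneg (y - w)).eq_or_lt with h0 | h0
    · -- at the singularity the kernel takes the junk value `0`
      rw [← h0, Real.zero_rpow (by linarith)]; simp
    obtain ⟨n, hn1, hn2⟩ := exists_nat_pow_near_of_lt_one (x := ‖y - w‖ / R) (y := (1 / 2 : ℝ))
      (by positivity) ((div_le_one hR).2 hy'.le) (by norm_num) (by norm_num)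
    rw [lt_div_iff₀ hR] at hn1
    rw [div_le_iff₀ hR] at hn2
    refine le_trans ?_ (ENNReal.le_tsum n)
    have hmem : y ∈ closedBall w ((1 / 2) ^ n * R) := by
      rw [mem_closedBall, dist_eq_norm]; exact hn2
    simp only [φ, Set.indicator_of_mem hmem]
    apply ENNReal.ofReal_le_ofReal
    exact Real.rpow_le_rpow_of_nonpos (by positivity) hn1.le (by linarith)
  have hφi : ∀ n, ∫⁻ y, φ n y = ENNReal.ofReal (A * q ^ n) * ω * ENNReal.ofReal (R ^ α) := by
    intro n
    simp only [φ]
    rw [lintegral_indicator measurableSet_closedBall, setLIntegral_const,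
      Measure.addHaar_closedBall _ _ (by positivity), ← mul_assoc,
      ← ENNReal.ofReal_mul (by positivity), mul_right_comm _ ω,
      ← ENNReal.ofReal_mul (by positivity)]
    congr 2
    have hs : (0 : ℝ) < (1 / 2) ^ n := by positivity
    have e1 : ((1 / 2 : ℝ) ^ (n + 1) * R) = (1 / 2) * ((1 / 2) ^ n * R) := by ring
    rw [finrank_euclideanSpace_fin, e1, Real.mul_rpow (by norm_num) (by positivity), mul_assoc,
      mul_assoc, ← Real.rpow_natCast ((1 / 2) ^ n * R) d, ← Real.rpow_add (by positivity),
      sub_add_cancel, Real.mul_rpow (by positivity) hR.le]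
    congr 2
    rw [hq, ← Real.rpow_natCast, ← Real.rpow_natCast, ← Real.rpow_mul (by norm_num),
      ← Real.rpow_mul (by norm_num), mul_comm]
  calc ∫⁻ y in ball w R, ENNReal.ofReal (‖y - w‖ ^ (α - d))
      ≤ ∫⁻ y in ball w R, ∑' n, φ n y := setLIntegral_mono' measurableSet_ball hpt
    _ ≤ ∫⁻ y, ∑' n, φ n y := setLIntegral_le_lintegral _ _
    _ = ∑' n, ∫⁻ y, φ n y := lintegral_tsum fun n =>
        (measurable_const.indicator measurableSet_closedBall).aemeasurable
    _ = _ := by simp only [hφi, ENNReal.tsum_mul_right]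

/-! ### Near and far parts of the potential -/

/-- Contribution to `R_α f` of the mass of `f` in `ball c (2 r)`. -/
def nearPot (α : ℝ) (f : EuclideanSpace ℝ (Fin d) → ℝ) (c : EuclideanSpace ℝ (Fin d)) (r : ℝ)
    (y : EuclideanSpace ℝ (Fin d)) : ℝ≥0∞ :=
  ∫⁻ w in ball c (2 * r), ENNReal.ofReal (‖y - w‖ ^ (α - d)) * ENNReal.ofReal (f w)

lemma measurable_kernel_mul (α : ℝ) {f : EuclideanSpace ℝ (Fin d) → ℝ} (hf : Measurable f) :
    Measurable (fun q : EuclideanSpace ℝ (Fin d) × EuclideanSpace ℝ (Fin d) =>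
      ENNReal.ofReal (‖q.1 - q.2‖ ^ (α - d)) * ENNReal.ofReal (f q.2)) := by
  fun_prop

lemma measurable_rieszPot (α : ℝ) {f : EuclideanSpace ℝ (Fin d) → ℝ} (hf : Measurable f) :
    Measurable (rieszPot d α f) :=
  (measurable_kernel_mul α hf).lintegral_prod_right'

lemma measurable_nearPot (α : ℝ) {f : EuclideanSpace ℝ (Fin d) → ℝ} (hf : Measurable f)
    (c : EuclideanSpace ℝ (Fin d)) (r : ℝ) : Measurable (nearPot α f c r) :=
  (measurable_kernel_mul α hf).lintegral_prod_right'

/-- By Tonelli, the average of the near part over the ball is bounded through the integral of the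
kernel over `ball w (3 r)`, which contains `ball c r` whenever `w ∈ ball c (2 r)`. -/
lemma average_nearPot_le {α : ℝ} (hα0 : 0 < α) (hαd : α < d) :
    ∃ C : ℝ≥0∞, C ≠ ⊤ ∧ ∀ f : EuclideanSpace ℝ (Fin d) → ℝ, Measurable f →
      ∀ (c x : EuclideanSpace ℝ (Fin d)) (r : ℝ), 0 < r → x ∈ ball c r →
        (volume (ball c r))⁻¹ * ∫⁻ y in ball c r, nearPot α f c r y ≤ C * fracMax d α f x := by
  obtain ⟨C, hC, hker⟩ := lintegral_ball_kernel_le hα0 hαd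
  refine ⟨C * ENNReal.ofReal (3 ^ α * 2 ^ ((d : ℝ) - α)),
    ENNReal.mul_ne_top hC ENNReal.ofReal_ne_top, fun f hf c x r hr hx => ?_⟩
  set ω := volume (ball (0 : EuclideanSpace ℝ (Fin d)) 1) with hω
  set M := fracMax d α f x
  have hM : ∫⁻ w in ball c (2 * r), ENNReal.ofReal (f w) ≤
      ENNReal.ofReal ((2 * r) ^ ((d : ℝ) - α)) * (ω * M) :=
    lintegral_ball_le_fracMax f (by positivity) (ball_subset_ball (by linarith) hx)
  have hin : ∀ w ∈ ball c (2 * r),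
      ∫⁻ y in ball c r, ENNReal.ofReal (‖y - w‖ ^ (α - d)) * ENNReal.ofReal (f w) ≤
        C * ENNReal.ofReal ((3 * r) ^ α) * ENNReal.ofReal (f w) := by
    intro w hw
    rw [lintegral_mul_const _ (by fun_prop)]
    gcongr
    refine (lintegral_mono_set (ball_subset_ball' ?_)).trans (hker w (3 * r) (by positivity))
    rw [mem_ball, dist_comm] at hw
    linarith
  have hI : ∫⁻ y in ball c r, nearPot α f c r y ≤
      C * ENNReal.ofReal ((3 * r) ^ α) *
        (ENNReal.ofReal ((2 * r) ^ ((d : ℝ) - α)) * (ω * M)) := by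
    simp only [nearPot]
    rw [lintegral_lintegral_swap (measurable_kernel_mul α hf).aemeasurable]
    refine (setLIntegral_mono' measurableSet_ball hin).trans ?_
    rw [lintegral_const_mul _ (by fun_prop)]
    gcongr
  have hv0 : volume (ball c r) ≠ 0 := (measure_ball_pos _ _ hr).ne'
  have hvt : volume (ball c r) ≠ ⊤ := measure_ball_lt_top.ne
  have hv : ENNReal.ofReal ((3 * r) ^ α) * ENNReal.ofReal ((2 * r) ^ ((d : ℝ) - α)) * ω =
      volume (ball c r) * ENNReal.ofReal (3 ^ α * 2 ^ ((d : ℝ) - α)) := by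
    rw [Measure.addHaar_ball_of_pos _ _ hr, ← ENNReal.ofReal_mul (by positivity),
      mul_right_comm _ _ (ENNReal.ofReal (3 ^ α * 2 ^ ((d : ℝ) - α))),
      ← ENNReal.ofReal_mul (by positivity)]
    congr 2
    rw [Real.mul_rpow (by norm_num) hr.le, Real.mul_rpow (by norm_num) hr.le,
      finrank_euclideanSpace_fin]
    have : r ^ d = r ^ α * r ^ ((d : ℝ) - α) := by
      rw [← Real.rpow_add hr, add_sub_cancel, Real.rpow_natCast]
    rw [this]; ring
  calc (volume (ball c r))⁻¹ * ∫⁻ y in ball c r, nearPot α f c r y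
      ≤ (volume (ball c r))⁻¹ * (C * ENNReal.ofReal ((3 * r) ^ α) *
        (ENNReal.ofReal ((2 * r) ^ ((d : ℝ) - α)) * (ω * M))) := by gcongr
    _ = (volume (ball c r))⁻¹ * (ENNReal.ofReal ((3 * r) ^ α) *
        ENNReal.ofReal ((2 * r) ^ ((d : ℝ) - α)) * ω) * (C * M) := by ring
    _ = _ := by
        rw [hv, ← mul_assoc (volume (ball c r))⁻¹, ENNReal.inv_mul_cancel hv0 hvt]
        ring

/-- Off `ball c (2 r)`, the kernels seen from two points of `ball c r` are close, with a total
error controlled by the fractional maximal function. -/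
lemma rieszPot_le_add {α : ℝ} (hαd : α < d) :
    ∃ C : ℝ≥0∞, C ≠ ⊤ ∧ ∀ f : EuclideanSpace ℝ (Fin d) → ℝ, Measurable f →
      ∀ (c x : EuclideanSpace ℝ (Fin d)) (r : ℝ), 0 < r → x ∈ ball c r →
        ∀ y ∈ ball c r, ∀ z ∈ ball c r,
          rieszPot d α f y ≤ rieszPot d α f z + (nearPot α f c r y + C * fracMax d α f x) := by
  set p : ℝ := d - α with hp
  have hp0 : 0 < p := by linarith
  set ω := volume (ball (0 : EuclideanSpace ℝ (Fin d)) 1) with hω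
  set A : ℝ := 4 * p * 4 ^ p with hA
  refine ⟨(∑' n : ℕ, ENNReal.ofReal (A * (1 / 2) ^ n)) * ω,
    ENNReal.mul_ne_top
      (tsum_ofReal_geometric_lt_top (by norm_num) (by norm_num)).ne
      measure_ball_lt_top.ne, fun f hf c x r hr hx y hy z hz => ?_⟩
  set M := fracMax d α f x
  -- bound for the difference of the kernels on the dyadic annulus `2^n r ≤ |w - c| < 2^(n+1) r`
  let a : ℕ → ℝ := fun n => p * (2 ^ n * r / 2) ^ (-p - 1) * (2 * r)
  let φ : ℕ → EuclideanSpace ℝ (Fin d) → ℝ≥0∞ := fun n =>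
    (ball c (2 ^ (n + 1) * r)).indicator (fun w => ENNReal.ofReal (a n) * ENNReal.ofReal (f w))
  have hφm : ∀ n, Measurable (φ n) := fun n =>
    Measurable.indicator (by fun_prop) measurableSet_ball
  have hpt : ∀ w ∈ (ball c (2 * r))ᶜ,
      ENNReal.ofReal (‖y - w‖ ^ (α - d)) * ENNReal.ofReal (f w) ≤
        ENNReal.ofReal (‖z - w‖ ^ (α - d)) * ENNReal.ofReal (f w) + ∑' n, φ n w := by
    intro w hw
    have hw' : 2 * r ≤ dist w c := by simpa using hw
    obtain ⟨n, hn1, hn2⟩ := exists_nat_pow_near (x := dist w c / r) (y := (2 : ℝ))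
      (by rw [le_div_iff₀ hr]; linarith) (by norm_num)
    rw [le_div_iff₀ hr] at hn1
    rw [div_lt_iff₀ hr] at hn2
    rw [mem_ball] at hy hz
    have hfar : ∀ v, dist v c < r → 2 ^ n * r / 2 ≤ ‖v - w‖ := by
      intro v hv
      rw [← dist_eq_norm]
      have := dist_triangle_left w c v
      linarith
    have hyz : |‖y - w‖ - ‖z - w‖| ≤ 2 * r := by
      refine (abs_norm_sub_norm_le _ _).trans ?_
      rw [sub_sub_sub_cancel_right, ← dist_eq_norm]
      have := dist_triangle_right y z c
      linarith
    have hd := abs_rpow_neg_sub_le hp0 (m := 2 ^ n * r / 2) (by positivity) (hfar y hy) (hfar z hz)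
    have hd2 : ‖y - w‖ ^ (-p) ≤ ‖z - w‖ ^ (-p) + a n := by
      have h1 : p * (2 ^ n * r / 2) ^ (-p - 1) * |‖y - w‖ - ‖z - w‖| ≤ a n := by
        simp only [a]; gcongr
      linarith [le_abs_self (‖y - w‖ ^ (-p) - ‖z - w‖ ^ (-p))]
    have hmem : w ∈ ball c (2 ^ (n + 1) * r) := hn2
    calc ENNReal.ofReal (‖y - w‖ ^ (α - d)) * ENNReal.ofReal (f w)
        ≤ (ENNReal.ofReal (‖z - w‖ ^ (α - d)) + ENNReal.ofReal (a n)) * ENNReal.ofReal (f w) := by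
          gcongr
          rw [show α - d = -p by rw [hp]; ring]
          exact (ENNReal.ofReal_le_ofReal hd2).trans ENNReal.ofReal_add_le
      _ = ENNReal.ofReal (‖z - w‖ ^ (α - d)) * ENNReal.ofReal (f w) + φ n w := by
          simp only [φ, Set.indicator_of_mem hmem]; ring
      _ ≤ _ := by gcongr; exact ENNReal.le_tsum n
  have hφi : ∀ n, ∫⁻ w, φ n w ≤ ENNReal.ofReal (A * (1 / 2) ^ n) * ω * M := by
    intro n
    simp only [φ]
    rw [lintegral_indicator measurableSet_ball, lintegral_const_mul _ (by fun_prop)]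
    have hx' : x ∈ ball c (2 ^ (n + 1) * r) := by
      refine ball_subset_ball ?_ hx
      have : (1 : ℝ) ≤ 2 ^ (n + 1) := one_le_pow₀ (by norm_num)
      nlinarith
    refine (mul_le_mul_right (lintegral_ball_le_fracMax (α := α) f (by positivity) hx') _).trans
      (le_of_eq ?_)
    rw [← mul_assoc, ← ENNReal.ofReal_mul (by positivity), ← mul_assoc]
    congr 3
    have hρ : (0 : ℝ) < 2 ^ n * r / 2 := by positivity
    have e1 : (2 : ℝ) ^ (n + 1) * r = 4 * (2 ^ n * r / 2) := by ring
    have e2 : (2 ^ n * r / 2) ^ (-p - 1) * (2 ^ n * r / 2) ^ p = (2 ^ n * r / 2)⁻¹ := by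
      rw [← Real.rpow_add hρ, show -p - 1 + p = -1 by ring, Real.rpow_neg_one]
    simp only [a]
    rw [← hp, e1, Real.mul_rpow (by norm_num) hρ.le]
    calc p * (2 ^ n * r / 2) ^ (-p - 1) * (2 * r) * (4 ^ p * (2 ^ n * r / 2) ^ p)
        = p * (2 * r) * 4 ^ p * ((2 ^ n * r / 2) ^ (-p - 1) * (2 ^ n * r / 2) ^ p) := by ring
      _ = A * (1 / 2) ^ n := by
        rw [e2, hA, one_div, inv_pow]
        field_simp
        ring
  have hΦ : ∫⁻ w, ∑' n, φ n w ≤ (∑' n : ℕ, ENNReal.ofReal (A * (1 / 2) ^ n)) * ω * M := by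
    rw [lintegral_tsum fun n => (hφm n).aemeasurable, ← ENNReal.tsum_mul_right,
      ← ENNReal.tsum_mul_right]
    exact ENNReal.tsum_le_tsum hφi
  have hfarle : ∫⁻ w in (ball c (2 * r))ᶜ,
      ENNReal.ofReal (‖y - w‖ ^ (α - d)) * ENNReal.ofReal (f w) ≤
        rieszPot d α f z + (∑' n : ℕ, ENNReal.ofReal (A * (1 / 2) ^ n)) * ω * M := by
    refine (setLIntegral_mono' measurableSet_ball.compl hpt).trans ?_
    rw [lintegral_add_left (by fun_prop)]
    exact add_le_add (setLIntegral_le_lintegral _ _)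
      ((setLIntegral_le_lintegral _ _).trans hΦ)
  calc rieszPot d α f y
      = nearPot α f c r y + ∫⁻ w in (ball c (2 * r))ᶜ,
          ENNReal.ofReal (‖y - w‖ ^ (α - d)) * ENNReal.ofReal (f w) :=
        (lintegral_add_compl _ measurableSet_ball).symm
    _ ≤ nearPot α f c r y + (rieszPot d α f z + _) := by gcongr
    _ = _ := by ring

end

/-- **Sharp function of the Riesz potential (Adams).** For `0 < α < d` there is `N = N(d,α)`
such that for every measurable `f ≥ 0` with `R_α f` locally integrable, and every `x`,
`(R_α f)^{♯}(x) ≤ N 𝕄_α f(x)`. -/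
theorem sharp_of_riesz_potential (d : ℕ) (hd : 1 ≤ d) (α : ℝ) (hα0 : 0 < α) (hαd : α < d) :
    ∃ N : ℝ, 0 < N ∧
      ∀ f : EuclideanSpace ℝ (Fin d) → ℝ, Measurable f → (∀ x, 0 ≤ f x) →
        (∀ r : ℝ, 0 < r → (∫⁻ x in ball (0 : EuclideanSpace ℝ (Fin d)) r,
            rieszPot d α f x ∂volume) < ⊤) →
        ∀ x, sharpFn d (fun z => (rieszPot d α f z).toReal) x ≤
          ENNReal.ofReal N * fracMax d α f x := by
  obtain ⟨C₁, hC₁, hnear⟩ := average_nearPot_le hα0 hαd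
  obtain ⟨C₂, hC₂, hfar⟩ := rieszPot_le_add hαd
  have hC : 2 * C₁ + C₂ ≠ ⊤ :=
    ENNReal.add_ne_top.2 ⟨ENNReal.mul_ne_top (by norm_num) hC₁, hC₂⟩
  refine ⟨(2 * C₁ + C₂).toReal + 1, by positivity, fun f hf _ hloc x => ?_⟩
  refine iSup_le fun c => iSup_le fun r => iSup_le fun hr => iSup_le fun hx => ?_
  have hv0 : volume (ball c r) ≠ 0 := (measure_ball_pos _ _ hr).ne'
  have hvt : volume (ball c r) ≠ ⊤ := measure_ball_lt_top.ne
  -- normalized Lebesgue measure on the ball, so that averages become integrals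
  set ν : Measure (EuclideanSpace ℝ (Fin d)) :=
    (volume (ball c r))⁻¹ • volume.restrict (ball c r) with hν
  have : IsProbabilityMeasure ν :=
    ⟨by simp [hν, ENNReal.inv_mul_cancel hv0 hvt]⟩
  have hνi : ∀ g : EuclideanSpace ℝ (Fin d) → ℝ≥0∞,
      ∫⁻ y, g y ∂ν = (volume (ball c r))⁻¹ * ∫⁻ y in ball c r, g y := fun g => by
    rw [hν, lintegral_smul_measure, smul_eq_mul]
  have hνavg : ∀ g : EuclideanSpace ℝ (Fin d) → ℝ, ⨍ z in ball c r, g z = ∫ z, g z ∂ν :=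
    fun g => by rw [average, Measure.restrict_apply_univ]
  have hfin : ∫⁻ y, rieszPot d α f y ∂ν ≠ ⊤ := by
    rw [hνi]
    refine ENNReal.mul_ne_top (ENNReal.inv_ne_top.2 hv0) (ne_top_of_le_ne_top
      (hloc (r + ‖c‖) (by positivity)).ne (lintegral_mono_set (ball_subset_ball' ?_)))
    rw [dist_zero_right]
  have hmem : ∀ᵐ y ∂ν, y ∈ ball c r :=
    Measure.ae_smul_measure (ae_restrict_mem measurableSet_ball) _
  have hosc := mean_oscillation_le ν (rieszPot d α f) (nearPot α f c r)
    (measurable_rieszPot α hf) (measurable_nearPot α hf c r) hfin (C₂ * fracMax d α f x) (by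
      filter_upwards [hmem] with y hy
      filter_upwards [hmem] with z hz
      exact ⟨hfar f hf c x r hr hx y hy z hz, hfar f hf c x r hr hx z hz y hy⟩)
  rw [← hνi, hνavg]
  refine hosc.trans ?_
  rw [hνi]
  calc 2 * ((volume (ball c r))⁻¹ * ∫⁻ y in ball c r, nearPot α f c r y) + C₂ * fracMax d α f x
      ≤ 2 * (C₁ * fracMax d α f x) + C₂ * fracMax d α f x := by
        gcongr ?_ + _
        exact mul_le_mul_right (hnear f hf c x r hr hx) 2
    _ = (2 * C₁ + C₂) * fracMax d α f x := by ring
    _ ≤ _ := by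
        gcongr
        rw [ENNReal.le_ofReal_iff_toReal_le hC (by positivity)]
        linarith
end
end

section
/- Adams's theorem: Let d ≥ 1, 0 < α < d, 1 < r < p < ∞ and A ∈ [0,∞). Suppose b ≥ 0 is measurable on ℝ^d and satisfies sup_{ρ>0} ρ^α sup_B ( ⨍_B b^p dx )^{1/p} ≤ A, the inner supremum being over open balls B of radius ρ. Then there is a constant N = N(α,d,r,p), independent of b, A and f, such that for every f ∈ L_r(ℝ^d): ∫_{ℝ^d} b^r (R_α |f|)^r dx ≤ N A^r ∫_{ℝ^d} |f|^r dx. -/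
/-!
The proof is a Schur test with a weight built from `b`. Put `h = b ^ p`, let `M` be the
Hardy–Littlewood maximal function and `w = (M h) ^ (1 / p)`. Up to the constant `2 ^ (d / p)`,
`b ≤ w` almost everywhere (`le_maxFn_ae`), so `b` may be replaced by `w`.

For every `σ < p` the average of `w ^ σ` over a ball `B_ρ(x)` is at most a constant times
`min(w(x), A ρ^{-α}) ^ σ` (`weight_avg`): the first bound is the Coifman–Rochberg theorem that
`(M h) ^ θ` is an `A₁` weight for `θ < 1`, the second says that `w` inherits the Morrey condition.
Both come from the local weak type `(1,1)` estimate for `M` (`weak_type`, `kolm`).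

Summing over dyadic shells, with the first bound for small radii and the second for large ones,
gives the Hedberg-type inequality `R_α(w ^ σ) ≤ N A w ^ (σ - 1)` for `1 < σ < p`
(`potential_bound`). Applied with `σ = s` and `σ = (s - 1) / (r - 1)`, where `s > r` is close to
`r`, this is exactly the hypothesis of the Schur test (`schur`) for the operator
`f ↦ w · R_α f` on `L_r`, whose norm is thereby at most `N A`.
-/


open MeasureTheory ENNReal Metric

noncomputable section

/-! ### Averages over balls and the maximal function -/

/-- Euclidean space `ℝ^d`. -/
abbrev Eu (d : ℕ) : Type := EuclideanSpace ℝ (Fin d)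

/-- The centred Hardy–Littlewood maximal function of `h ≥ 0`. Only rational radii are used, which
makes measurability immediate and costs a factor `2 ^ d` for real radii (`closedBall_le_maxFn`). -/
def maxFn (d : ℕ) (h : Eu d → ℝ≥0∞) (x : Eu d) : ℝ≥0∞ :=
  ⨆ q : {q : ℚ // 0 < q}, (volume (ball x ((q : ℚ) : ℝ)))⁻¹ * ∫⁻ y in ball x ((q : ℚ) : ℝ), h y

lemma vol_ball {d : ℕ} (x : Eu d) {ρ : ℝ} (hρ : 0 < ρ) :
    volume (ball x ρ) = ENNReal.ofReal ρ ^ d * volume (ball (0 : Eu d) 1) := by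
  rw [Measure.addHaar_ball_of_pos _ _ hρ, finrank_euclideanSpace_fin,
    ENNReal.ofReal_pow hρ.le]

lemma vol_closedBall {d : ℕ} (x : Eu d) {ρ : ℝ} (hρ : 0 < ρ) :
    volume (closedBall x ρ) = volume (ball x ρ) := by
  rw [Measure.addHaar_closedBall _ _ hρ.le, Measure.addHaar_ball_of_pos _ _ hρ]

lemma vol_ball_mul {d : ℕ} (x z : Eu d) {ρ c : ℝ} (hρ : 0 < ρ) (hc : 0 < c) :
    volume (ball x (c * ρ)) = ENNReal.ofReal c ^ d * volume (ball z ρ) := by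
  rw [vol_ball x (mul_pos hc hρ), vol_ball z hρ, ENNReal.ofReal_mul hc.le, mul_pow, mul_assoc]

lemma vol_ball_pos {d : ℕ} (x : Eu d) {ρ : ℝ} (hρ : 0 < ρ) : volume (ball x ρ) ≠ 0 :=
  (measure_ball_pos volume x hρ).ne'

lemma vol_ball_fin {d : ℕ} (x : Eu d) (ρ : ℝ) : volume (ball x ρ) ≠ ∞ :=
  measure_ball_lt_top.ne

lemma measurable_ballInt {d : ℕ} {h : Eu d → ℝ≥0∞} (hh : Measurable h) (ρ : ℝ) :
    Measurable fun x => ∫⁻ y in ball x ρ, h y := by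
  have : (fun x => ∫⁻ y in ball x ρ, h y) =
      fun x => ∫⁻ y, {p : Eu d × Eu d | dist p.2 p.1 < ρ}.indicator (fun p => h p.2) (x, y) := by
    funext x
    rw [← lintegral_indicator measurableSet_ball]
    rfl
  rw [this]
  apply Measurable.lintegral_prod_right'
  exact (hh.comp measurable_snd).indicator
    (measurableSet_lt (measurable_snd.dist measurable_fst) measurable_const)

lemma measurable_maxFn {d : ℕ} {h : Eu d → ℝ≥0∞} (hh : Measurable h) :
    Measurable (maxFn d h) := by
  refine Measurable.iSup fun q => ?_
  have hq : (0 : ℝ) < ((q : ℚ) : ℝ) := by exact_mod_cast q.2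
  simp_rw [vol_ball _ hq]
  exact (measurable_ballInt hh _).const_mul _

lemma closedBall_le_maxFn {d : ℕ} (h : Eu d → ℝ≥0∞) (x : Eu d) {ρ : ℝ} (hρ : 0 < ρ) :
    ∫⁻ y in closedBall x ρ, h y ≤ 2 ^ d * maxFn d h x * volume (ball x ρ) := by
  obtain ⟨q, hq1, hq2⟩ := exists_rat_btwn (show ρ < 2 * ρ by linarith)
  have hq0 : (0 : ℝ) < q := hρ.trans hq1
  have h1 : (volume (ball x (q : ℝ)))⁻¹ * ∫⁻ y in ball x (q : ℝ), h y ≤ maxFn d h x :=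
    le_iSup (fun q : {q : ℚ // 0 < q} =>
      (volume (ball x ((q : ℚ) : ℝ)))⁻¹ * ∫⁻ y in ball x ((q : ℚ) : ℝ), h y)
      ⟨q, by exact_mod_cast hq0⟩
  calc ∫⁻ y in closedBall x ρ, h y ≤ ∫⁻ y in ball x (q : ℝ), h y :=
        lintegral_mono_set (closedBall_subset_ball hq1)
    _ = volume (ball x (q : ℝ)) * ((volume (ball x (q : ℝ)))⁻¹ * ∫⁻ y in ball x (q : ℝ), h y) := by
        rw [← mul_assoc, ENNReal.mul_inv_cancel (vol_ball_pos x hq0) (vol_ball_fin x _), one_mul]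
    _ ≤ volume (ball x (2 * ρ)) * maxFn d h x := by
        gcongr
    _ = _ := by
        rw [vol_ball_mul x x hρ two_pos]; simp; ring

/-- Weak type `(1,1)` estimate for the maximal function truncated to radii at most `ρ`, localised to
a ball of radius `ρ`. It follows from the Vitali covering lemma with enlargement factor `5`; the
set need not be measurable. -/
lemma weak_type {d : ℕ} (h : Eu d → ℝ≥0∞) (x : Eu d) {ρ : ℝ}
    {lam : ℝ≥0∞} (h0 : lam ≠ 0) (ht : lam ≠ ∞) :
    volume {z ∈ ball x ρ | ∃ q : ℝ, 0 < q ∧ q ≤ ρ ∧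
        lam * volume (ball z q) < ∫⁻ y in ball z q, h y} ≤
      5 ^ d * lam⁻¹ * ∫⁻ y in ball x (2 * ρ), h y := by
  set S := {z ∈ ball x ρ | ∃ q : ℝ, 0 < q ∧ q ≤ ρ ∧
        lam * volume (ball z q) < ∫⁻ y in ball z q, h y} with hS
  have hSr : ∀ z : Eu d, ∃ q : ℝ, z ∈ S → 0 < q ∧ q ≤ ρ ∧
        lam * volume (ball z q) < ∫⁻ y in ball z q, h y := by
    intro z
    by_cases hz : z ∈ S
    · obtain ⟨q, hq⟩ := hz.2
      exact ⟨q, fun _ => hq⟩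
    · exact ⟨0, fun h => absurd h hz⟩
  choose q hq using hSr
  obtain ⟨u, hu, hdisj, hcov⟩ := Vitali.exists_disjoint_subfamily_covering_enlargement_ball S
    id q ρ (fun a ha => (hq a ha).2.1) 5 (by norm_num)
  have hcount : u.Countable := hdisj.countable_of_isOpen (fun _ _ => isOpen_ball)
    (fun a ha => nonempty_ball.2 (hq a (hu ha)).1)
  calc volume S ≤ volume (⋃ b ∈ u, ball b (5 * q b)) := by
        apply measure_mono
        intro z hz
        obtain ⟨b, hb, hsub⟩ := hcov z hz
        exact Set.mem_iUnion₂.2 ⟨b, hb, hsub (mem_ball_self (hq z hz).1)⟩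
    _ ≤ ∑' b : u, volume (ball (b : Eu d) (5 * q b)) := measure_biUnion_le _ hcount _
    _ ≤ ∑' b : u, 5 ^ d * lam⁻¹ * ∫⁻ y in ball (b : Eu d) (q b), h y := by
        refine ENNReal.tsum_le_tsum fun b => ?_
        obtain ⟨hq0, -, hq2⟩ := hq b (hu b.2)
        rw [vol_ball_mul (b : Eu d) b hq0 (by norm_num), mul_assoc]
        simp only [ENNReal.ofReal_ofNat]
        gcongr
        rw [← ENNReal.mul_le_iff_le_inv h0 ht]
        exact hq2.le
    _ = 5 ^ d * lam⁻¹ * ∫⁻ y in ⋃ b ∈ u, ball b (q b), h y := by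
        rw [ENNReal.tsum_mul_left]
        congr 1
        exact (lintegral_biUnion hcount (fun _ _ => measurableSet_ball) hdisj h).symm
    _ ≤ _ := by
        gcongr
        refine Set.iUnion₂_subset fun b hb => ball_subset_ball' ?_
        have := (hq b (hu hb)).2.1
        have h2 : dist b x < ρ := (hu hb).1
        linarith

/-- A dyadic, pointwise form of the layer cake formula, above the level `T`. -/
lemma layer (u T : ℝ≥0∞) (hT0 : T ≠ 0) (hT : T ≠ ∞) {θ : ℝ} (hθ : 0 < θ) :
    u ^ θ ≤ T ^ θ + ∑' j : ℕ, (2 ^ (j + 1) * T) ^ θ * (if 2 ^ j * T < u then 1 else 0) := by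
  by_cases hu : u = ∞
  -- every term of the series is at least `T ^ θ > 0`, so the series diverges
  · have : ∑' j : ℕ, (2 ^ (j + 1) * T) ^ θ * (if 2 ^ j * T < u then (1 : ℝ≥0∞) else 0) = ∞ := by
      rw [eq_top_iff, ← ENNReal.tsum_const_eq_top_of_ne_zero (α := ℕ) (c := T ^ θ)
        (by simp [ENNReal.rpow_eq_zero_iff, hT0, hT])]
      refine ENNReal.tsum_le_tsum fun j => ?_
      rw [if_pos (by rw [hu]; exact (ENNReal.mul_lt_top (by simp) hT.lt_top)), mul_one]
      refine ENNReal.rpow_le_rpow ?_ hθ.le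
      exact le_mul_of_one_le_left' (one_le_pow_of_one_le' (by norm_num) _)
    rw [this]; simp
  · have key : ∀ n : ℕ, u ≤ 2 ^ n * T → u ^ θ ≤ T ^ θ +
        ∑' j : ℕ, (2 ^ (j + 1) * T) ^ θ * (if 2 ^ j * T < u then (1 : ℝ≥0∞) else 0) := by
      intro n
      induction n with
      | zero =>
        intro h
        refine le_add_right (ENNReal.rpow_le_rpow (by simpa using h) hθ.le)
      | succ n ih =>
        intro h
        by_cases h2 : u ≤ 2 ^ n * T
        · exact ih h2
        · refine le_add_left ?_
          refine le_trans ?_ (ENNReal.le_tsum n)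
          rw [if_pos (not_le.1 h2), mul_one]
          exact ENNReal.rpow_le_rpow h hθ.le
    obtain ⟨n, hn⟩ := ENNReal.exists_nat_gt (ENNReal.div_lt_top hu hT0).ne
    apply key n
    rw [← ENNReal.div_le_iff hT0 hT]
    refine hn.le.trans ?_
    exact_mod_cast (Nat.lt_two_pow_self (n := n)).le

/-- Kolmogorov / Coifman–Rochberg: if every ball centred at `x` of radius at least `ρ` has
`h`-average at most `T`, then the average of `(M h) ^ θ`, `θ < 1`, over `ball x ρ` is at most a
constant times `T ^ θ`. Above the level `2 ^ d * T` only radii `q ≤ ρ` can contribute to `M h` on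
that ball, so the local weak type estimate controls the level sets. -/
lemma kolm (d : ℕ) {θ : ℝ} (hθ : 0 < θ) (hθ1 : θ < 1) :
    ∃ C : ℝ≥0∞, C ≠ ∞ ∧ ∀ h : Eu d → ℝ≥0∞, Measurable h → ∀ (x : Eu d) (ρ : ℝ), 0 < ρ →
      ∀ T : ℝ≥0∞, T ≠ 0 → T ≠ ∞ →
      (∀ t : ℝ, ρ ≤ t → ∫⁻ y in ball x t, h y ≤ T * volume (ball x t)) →
      ∫⁻ y in ball x ρ, maxFn d h y ^ θ ≤ C * T ^ θ * volume (ball x ρ) := by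
  set Sg : ℝ≥0∞ := ∑' j : ℕ, ((2 : ℝ≥0∞) ^ (θ - 1)) ^ j with hSg
  have hSgfin : Sg ≠ ∞ := by
    rw [hSg, ENNReal.tsum_geometric]
    apply ENNReal.inv_ne_top.2
    have : (2 : ℝ≥0∞) ^ (θ - 1) < 1 :=
      ENNReal.rpow_lt_one_of_one_lt_of_neg (by norm_num) (by linarith)
    exact (tsub_pos_of_lt this).ne'
  refine ⟨((2 : ℝ≥0∞) ^ d) ^ θ * (1 + 2 ^ θ * 5 ^ d * Sg), ?_, ?_⟩
  · refine ENNReal.mul_ne_top (ENNReal.rpow_ne_top_of_nonneg hθ.le (by simp)) ?_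
    refine ENNReal.add_ne_top.2 ⟨by simp, ENNReal.mul_ne_top (ENNReal.mul_ne_top
      (ENNReal.rpow_ne_top_of_nonneg hθ.le (by simp)) (by simp)) hSgfin⟩
  intro h hh x ρ hρ T hT0 hT hTb
  set T' : ℝ≥0∞ := 2 ^ d * T with hT'
  have hT'0 : T' ≠ 0 := mul_ne_zero (by simp) hT0
  have hT't : T' ≠ ∞ := ENNReal.mul_ne_top (by simp) hT
  have hweak : ∀ j : ℕ, volume ({z | 2 ^ j * T' < maxFn d h z} ∩ ball x ρ) ≤
      5 ^ d * (2 ^ j)⁻¹ * volume (ball x ρ) := by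
    intro j
    have hl0 : 2 ^ j * T' ≠ 0 := mul_ne_zero (by simp) hT'0
    have hlt : 2 ^ j * T' ≠ ∞ := ENNReal.mul_ne_top (by simp) hT't
    have hsub : {z | 2 ^ j * T' < maxFn d h z} ∩ ball x ρ ⊆ {z ∈ ball x ρ | ∃ q : ℝ, 0 < q ∧ q ≤ ρ ∧
        2 ^ j * T' * volume (ball z q) < ∫⁻ y in ball z q, h y} := by
      rintro z ⟨hz, hzb⟩
      refine ⟨hzb, ?_⟩
      obtain ⟨⟨q, hq⟩, hlt2⟩ := lt_iSup_iff.1 (show 2 ^ j * T' <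
        ⨆ q : {q : ℚ // 0 < q}, (volume (ball z ((q : ℚ) : ℝ)))⁻¹ *
          ∫⁻ y in ball z ((q : ℚ) : ℝ), h y from hz)
      have hq0 : (0 : ℝ) < q := by exact_mod_cast hq
      have hlt3 : 2 ^ j * T' * volume (ball z (q : ℝ)) < ∫⁻ y in ball z (q : ℝ), h y := by
        rw [← ENNReal.div_eq_inv_mul] at hlt2
        exact (ENNReal.lt_div_iff_mul_lt (Or.inl (vol_ball_pos z hq0))
          (Or.inl (vol_ball_fin z _))).1 hlt2
      refine ⟨q, hq0, ?_, hlt3⟩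
      by_contra! hqρ
      -- a ball of radius `q > ρ` sits inside `ball x (2 * q)`, whose average is at most `T`
      refine absurd hlt3 (not_lt.2 ?_)
      calc ∫⁻ y in ball z (q : ℝ), h y ≤ ∫⁻ y in ball x (2 * q), h y := by
            refine lintegral_mono_set (ball_subset_ball' ?_)
            have : dist z x < ρ := hzb
            linarith
        _ ≤ T * volume (ball x (2 * q)) := hTb _ (by linarith)
        _ = T' * volume (ball z (q : ℝ)) := by
            rw [vol_ball_mul x z hq0 two_pos, hT']; simp; ring
        _ ≤ _ := by
            gcongr
            exact le_mul_of_one_le_left' (one_le_pow_of_one_le' (by norm_num) _)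
    calc _ ≤ _ := measure_mono hsub
      _ ≤ _ := weak_type h x hl0 hlt
      _ ≤ 5 ^ d * (2 ^ j * T')⁻¹ * (T * volume (ball x (2 * ρ))) := by
          gcongr
          exact hTb _ (by linarith)
      _ = 5 ^ d * (2 ^ j * T')⁻¹ * (T' * volume (ball x ρ)) := by
          rw [vol_ball_mul x x hρ two_pos, hT']; simp; ring
      _ = 5 ^ d * (2 ^ j)⁻¹ * (T'⁻¹ * T') * volume (ball x ρ) := by
          rw [ENNReal.mul_inv (by simp) (by simp)]; ring
      _ = _ := by rw [ENNReal.inv_mul_cancel hT'0 hT't, mul_one]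
  have hmeas : ∀ j : ℕ, MeasurableSet {z | 2 ^ j * T' < maxFn d h z} := fun j =>
    measurableSet_lt measurable_const (measurable_maxFn hh)
  have hind : ∀ j : ℕ, Measurable fun y => (if 2 ^ j * T' < maxFn d h y then (1 : ℝ≥0∞) else 0) :=
    fun j => Measurable.ite (hmeas j) measurable_const measurable_const
  calc ∫⁻ y in ball x ρ, maxFn d h y ^ θ
      ≤ ∫⁻ y in ball x ρ, (T' ^ θ + ∑' j : ℕ, (2 ^ (j + 1) * T') ^ θ *
          (if 2 ^ j * T' < maxFn d h y then 1 else 0)) :=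
        lintegral_mono fun y => layer _ _ hT'0 hT't hθ
    _ = T' ^ θ * volume (ball x ρ) + ∑' j : ℕ, (2 ^ (j + 1) * T') ^ θ *
          volume ({z | 2 ^ j * T' < maxFn d h z} ∩ ball x ρ) := by
        rw [lintegral_add_left measurable_const, lintegral_const,
          lintegral_tsum fun j => ((hind j).const_mul _).aemeasurable]
        simp only [Measure.restrict_apply MeasurableSet.univ, Set.univ_inter]
        congr 2
        funext j
        rw [lintegral_const_mul _ (hind j)]
        congr 1
        have : (fun y => (if 2 ^ j * T' < maxFn d h y then (1 : ℝ≥0∞) else 0)) =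
          {z | 2 ^ j * T' < maxFn d h z}.indicator 1 := by
          funext y; simp [Set.indicator]
        rw [this, lintegral_indicator_one (hmeas j), Measure.restrict_apply (hmeas j)]
    _ ≤ T' ^ θ * volume (ball x ρ) + ∑' j : ℕ, (2 ^ (j + 1) * T') ^ θ *
          (5 ^ d * (2 ^ j)⁻¹ * volume (ball x ρ)) := by
        gcongr with j
        exact hweak j
    _ = T' ^ θ * volume (ball x ρ) + ∑' j : ℕ, T' ^ θ * volume (ball x ρ) * (2 ^ θ * 5 ^ d) *
          ((2 : ℝ≥0∞) ^ (θ - 1)) ^ j := by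
        congr 2
        funext j
        have e1 : ((2 : ℝ≥0∞) ^ (j + 1)) ^ θ * (2 ^ j)⁻¹ = 2 ^ θ * ((2 : ℝ≥0∞) ^ (θ - 1)) ^ j := by
          rw [← ENNReal.rpow_natCast, ← ENNReal.rpow_natCast, ← ENNReal.rpow_natCast,
            ← ENNReal.rpow_neg, ← ENNReal.rpow_mul, ← ENNReal.rpow_mul,
            ← ENNReal.rpow_add _ _ (by simp) (by simp), ← ENNReal.rpow_add _ _ (by simp) (by simp)]
          congr 1
          push_cast; ring
        rw [ENNReal.mul_rpow_of_nonneg _ _ hθ.le]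
        calc _ = T' ^ θ * volume (ball x ρ) * 5 ^ d *
              (((2 : ℝ≥0∞) ^ (j + 1)) ^ θ * (2 ^ j)⁻¹) := by ring
          _ = _ := by rw [e1]; ring
    _ = _ := by
        rw [ENNReal.tsum_mul_left, ← hSg, hT', ENNReal.mul_rpow_of_nonneg _ _ hθ.le]
        ring

/-! ### A Hedberg-type bound for Riesz potentials -/

/-- The contribution of the `k`-th dyadic shell, with radii normalised by `δ ^ α = A / w`, decays
geometrically in both directions: for `k ≥ 0` by the bound `A * ρ ^ (-α)` and `σ > 1`, for `k ≤ 0`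
by the bound `w` and `α > 0`. -/
lemma shell_real (d : ℕ) {α σ A w δ : ℝ} (hA : 0 < A) (hw : 0 < w) (hα : 0 < α)
    (hσ : 1 < σ) (hδ : 0 < δ) (hδe : δ ^ α = A / w) (k : ℤ) :
    (2 ^ k * δ) ^ (α - d) * (2 ^ (k + 1) * δ) ^ d *
      (min w (A * (2 ^ (k + 1) * δ) ^ (-α))) ^ σ ≤
      2 ^ d * (A * w ^ (σ - 1)) * (max (2 ^ (α * (1 - σ))) (2 ^ (-α)) : ℝ) ^ k.natAbs := by
  have hs : (0 : ℝ) < 2 ^ k := zpow_pos two_pos k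
  set s : ℝ := 2 ^ k with hsdef
  have hs1 : (2 : ℝ) ^ (k + 1) = 2 * s := by rw [zpow_add_one₀ two_ne_zero]; ring
  have hsδ : 0 < s * δ := mul_pos hs hδ
  rw [hs1]
  have hpre : (s * δ) ^ (α - d) * (2 * s * δ) ^ d = 2 ^ d * (s ^ α * (A / w)) := by
    rw [mul_assoc 2, mul_pow, Real.rpow_sub hsδ, Real.rpow_natCast, Real.mul_rpow hs.le hδ.le, hδe]
    field_simp
  rw [hpre]
  set m := min w (A * (2 * s * δ) ^ (-α)) with hm
  have hm0 : 0 < m := lt_min hw (by positivity)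
  have hm1 : m ≤ w := min_le_left _ _
  have hm2 : m ≤ w * s ^ (-α) := by
    refine (min_le_right _ _).trans ?_
    have : (2 * s * δ) ^ (-α) ≤ (s * δ) ^ (-α) :=
      Real.rpow_le_rpow_of_nonpos hsδ (by nlinarith) (by linarith)
    calc A * (2 * s * δ) ^ (-α) ≤ A * (s * δ) ^ (-α) := by gcongr
      _ = w * s ^ (-α) := by
        rw [Real.mul_rpow hs.le hδ.le, Real.rpow_neg hδ.le, hδe]
        field_simp
  have hww : w ^ σ = w * w ^ (σ - 1) := by
    rw [Real.rpow_sub_one hw.ne']; field_simp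
  have hsuff : s ^ α * m ^ σ ≤ w ^ σ * (max (2 ^ (α * (1 - σ))) (2 ^ (-α)) : ℝ) ^ k.natAbs := by
    obtain ⟨n, rfl | rfl⟩ := k.eq_nat_or_neg
    · have h1 : m ^ σ ≤ w ^ σ * s ^ (-α * σ) := by
        rw [Real.rpow_mul hs.le, ← Real.mul_rpow hw.le (by positivity)]
        exact Real.rpow_le_rpow hm0.le hm2 (by linarith)
      have h2 : s ^ α * s ^ (-α * σ) = ((2 : ℝ) ^ (α * (1 - σ))) ^ n := by
        rw [← Real.rpow_add hs, hsdef, zpow_natCast, ← Real.rpow_natCast, ← Real.rpow_natCast,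
          ← Real.rpow_mul two_pos.le, ← Real.rpow_mul two_pos.le]
        congr 1; ring
      calc s ^ α * m ^ σ ≤ s ^ α * (w ^ σ * s ^ (-α * σ)) := by gcongr
        _ = w ^ σ * ((2 : ℝ) ^ (α * (1 - σ))) ^ n := by rw [← h2]; ring
        _ ≤ _ := by
          rw [Int.natAbs_natCast]
          gcongr
          exact le_max_left _ _
    · have h1 : m ^ σ ≤ w ^ σ := Real.rpow_le_rpow hm0.le hm1 (by linarith)
      have h2 : s ^ α = ((2 : ℝ) ^ (-α)) ^ n := by
        rw [hsdef, zpow_neg, zpow_natCast, ← Real.rpow_natCast, ← Real.rpow_natCast,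
          ← Real.rpow_neg two_pos.le, ← Real.rpow_mul two_pos.le, ← Real.rpow_mul two_pos.le]
        congr 1; ring
      rw [Int.natAbs_neg, Int.natAbs_natCast, h2, mul_comm]
      gcongr
      exact le_max_right _ _
  calc 2 ^ d * (s ^ α * (A / w)) * m ^ σ = 2 ^ d * (A / w) * (s ^ α * m ^ σ) := by ring
    _ ≤ 2 ^ d * (A / w) * (w ^ σ * (max (2 ^ (α * (1 - σ))) (2 ^ (-α)) : ℝ) ^ k.natAbs) := by
      gcongr
    _ = _ := by rw [hww]; field_simp

lemma kernel_shells {d : ℕ} {α δ : ℝ} (hαd : α < d) (hδ : 0 < δ) (x y : Eu d) :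
    ENNReal.ofReal (‖x - y‖ ^ (α - d)) ≤ ∑' k : ℤ, ENNReal.ofReal ((2 ^ k * δ) ^ (α - d)) *
      (ball x (2 ^ (k + 1) * δ)).indicator 1 y := by
  by_cases hxy : x = y
  · subst hxy
    rw [sub_self, norm_zero, Real.zero_rpow (by linarith), ENNReal.ofReal_zero]
    exact zero_le
  · have hpos : 0 < ‖x - y‖ := norm_pos_iff.2 (sub_ne_zero.2 hxy)
    obtain ⟨k, hk1, hk2⟩ := _root_.exists_mem_Ico_zpow (div_pos hpos hδ) (one_lt_two (α := ℝ))
    rw [le_div_iff₀ hδ] at hk1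
    rw [div_lt_iff₀ hδ] at hk2
    refine le_trans ?_ (ENNReal.le_tsum k)
    rw [Set.indicator_of_mem (by rwa [mem_ball', dist_eq_norm]), Pi.one_apply, mul_one]
    apply ENNReal.ofReal_le_ofReal
    exact Real.rpow_le_rpow_of_nonpos (mul_pos (zpow_pos two_pos k) hδ) hk1 (by linarith)

/-- If the average of `u` over each `ball x ρ` is at most `C * min(w, A * ρ ^ (-α)) ^ σ` with
`σ > 1`, then `R_α u (x) ≤ K * C * A * w ^ (σ - 1)`. The kernel is split into dyadic shells around
the radius `(A / w) ^ (1 / α)` where the two bounds balance. -/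
lemma potential_bound (d : ℕ) {α σ : ℝ} (hα : 0 < α) (hαd : α < d) (hσ : 1 < σ) :
    ∃ K : ℝ≥0∞, K ≠ ∞ ∧ ∀ u : Eu d → ℝ≥0∞, Measurable u → ∀ (C : ℝ≥0∞) (x : Eu d) (A w : ℝ),
      0 < A → 0 < w →
      (∀ ρ : ℝ, 0 < ρ → ∫⁻ y in ball x ρ, u y ≤
        C * ENNReal.ofReal ((min w (A * ρ ^ (-α))) ^ σ) * volume (ball x ρ)) →
      ∫⁻ y, ENNReal.ofReal (‖x - y‖ ^ (α - d)) * u y ≤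
        K * C * ENNReal.ofReal (A * w ^ (σ - 1)) := by
  set β : ℝ := max (2 ^ (α * (1 - σ))) (2 ^ (-α)) with hβ
  have hβ0 : 0 < β := lt_max_of_lt_right (by positivity)
  have hβ1 : β < 1 := max_lt
    (Real.rpow_lt_one_of_one_lt_of_neg one_lt_two (by nlinarith))
    (Real.rpow_lt_one_of_one_lt_of_neg one_lt_two (by linarith))
  have hsum : Summable fun k : ℤ => β ^ k.natAbs :=
    Summable.of_nat_of_neg (by simpa using summable_geometric_of_lt_one hβ0.le hβ1)
      (by simpa using summable_geometric_of_lt_one hβ0.le hβ1)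
  refine ⟨volume (ball (0 : Eu d) 1) * 2 ^ d * ∑' k : ℤ, ENNReal.ofReal (β ^ k.natAbs), ?_, ?_⟩
  · exact ENNReal.mul_ne_top (ENNReal.mul_ne_top (vol_ball_fin _ _) (by simp))
      hsum.tsum_ofReal_ne_top
  intro u hu C x A w hA hw hb
  set δ : ℝ := (A / w) ^ (1 / α) with hδdef
  have hAw : 0 < A / w := div_pos hA hw
  have hδ : 0 < δ := Real.rpow_pos_of_pos hAw _
  have hδe : δ ^ α = A / w := by
    rw [hδdef, ← Real.rpow_mul hAw.le, one_div_mul_cancel hα.ne', Real.rpow_one]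
  calc ∫⁻ y, ENNReal.ofReal (‖x - y‖ ^ (α - d)) * u y
      ≤ ∫⁻ y, ∑' k : ℤ, ENNReal.ofReal ((2 ^ k * δ) ^ (α - d)) *
          (ball x (2 ^ (k + 1) * δ)).indicator u y := by
        refine lintegral_mono fun y => ?_
        refine (mul_le_mul_left (kernel_shells hαd hδ x y) (u y)).trans_eq ?_
        rw [← ENNReal.tsum_mul_right]
        congr 1
        funext k
        rw [mul_assoc]
        congr 1
        by_cases hy : y ∈ ball x (2 ^ (k + 1) * δ) <;> simp [hy]
    _ = ∑' k : ℤ, ENNReal.ofReal ((2 ^ k * δ) ^ (α - d)) *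
          ∫⁻ y in ball x (2 ^ (k + 1) * δ), u y := by
        rw [lintegral_tsum fun k =>
          ((hu.indicator measurableSet_ball).const_mul _).aemeasurable]
        congr 1
        funext k
        rw [lintegral_const_mul _ (hu.indicator measurableSet_ball),
          lintegral_indicator measurableSet_ball]
    _ ≤ ∑' k : ℤ, volume (ball (0 : Eu d) 1) * 2 ^ d * C * ENNReal.ofReal (A * w ^ (σ - 1)) *
          ENNReal.ofReal (β ^ k.natAbs) := by
        refine ENNReal.tsum_le_tsum fun k => ?_
        have hk : 0 < 2 ^ (k + 1) * δ := mul_pos (zpow_pos two_pos _) hδ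
        have hk' : 0 < 2 ^ k * δ := mul_pos (zpow_pos two_pos _) hδ
        have hmin : 0 ≤ min w (A * (2 ^ (k + 1) * δ) ^ (-α)) :=
          le_min hw.le (by positivity)
        calc _ ≤ ENNReal.ofReal ((2 ^ k * δ) ^ (α - d)) *
              (C * ENNReal.ofReal ((min w (A * (2 ^ (k + 1) * δ) ^ (-α))) ^ σ) *
                (ENNReal.ofReal (2 ^ (k + 1) * δ) ^ d * volume (ball (0 : Eu d) 1))) := by
              gcongr
              rw [← vol_ball x hk]
              exact hb _ hk
          _ = volume (ball (0 : Eu d) 1) * C * ENNReal.ofReal ((2 ^ k * δ) ^ (α - d) *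
              (2 ^ (k + 1) * δ) ^ d * (min w (A * (2 ^ (k + 1) * δ) ^ (-α))) ^ σ) := by
              rw [← ENNReal.ofReal_pow hk.le,
                ENNReal.ofReal_mul (p := (2 ^ k * δ) ^ (α - d) * (2 ^ (k + 1) * δ) ^ d)
                  (by positivity),
                ENNReal.ofReal_mul (p := (2 ^ k * δ) ^ (α - d)) (by positivity)]
              ring
          _ ≤ volume (ball (0 : Eu d) 1) * C * ENNReal.ofReal (2 ^ d * (A * w ^ (σ - 1)) *
              β ^ k.natAbs) := by
              exact mul_le_mul' le_rfl
                (ENNReal.ofReal_le_ofReal (shell_real d hA hw hα hσ hδ hδe k))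
          _ = _ := by
              rw [ENNReal.ofReal_mul (by positivity), ENNReal.ofReal_mul (by positivity),
                ENNReal.ofReal_pow (by norm_num), ENNReal.ofReal_ofNat]
              ring
    _ = _ := by
        rw [ENNReal.tsum_mul_left]; ring

/-! ### The Schur test -/

/-- Schur's test for the operator `g ↦ w * ∫ k(·, y) g(y) dy` on `L_r`, with a power of `w` itself
as the test function: Hölder's inequality with the splitting `1 = w ^ τ * w ^ (-τ)`,
`τ = (s - 1) / r`, followed by Tonelli's theorem. -/
lemma schur {X : Type*} [MeasurableSpace X] (μ : Measure X) [SFinite μ]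
    {k : X → X → ℝ≥0∞} (hk : Measurable (Function.uncurry k))
    {w g : X → ℝ≥0∞} (hw : Measurable w) (hg : Measurable g)
    (hw0 : ∀ᵐ x ∂μ, w x ≠ 0 ∧ w x ≠ ∞) {r s : ℝ} (hr : 1 < r) (B : ℝ≥0∞)
    (H1 : ∀ᵐ x ∂μ, ∫⁻ y, k x y * w y ^ ((s - 1) / (r - 1)) ∂μ ≤ B * w x ^ ((s - 1) / (r - 1) - 1))
    (H2 : ∀ᵐ y ∂μ, ∫⁻ x, k x y * w x ^ s ∂μ ≤ B * w y ^ (s - 1)) :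
    ∫⁻ x, w x ^ r * (∫⁻ y, k x y * g y ∂μ) ^ r ∂μ ≤ B ^ r * ∫⁻ y, g y ^ r ∂μ := by
  have hr0 : 0 < r := by linarith
  have hr1 : 0 < r - 1 := by linarith
  have hkx : ∀ x, Measurable (k x) := fun x => hk.comp measurable_prodMk_left
  set G : X → ℝ≥0∞ := fun y => g y ^ r * w y ^ (1 - s) with hG
  have hGm : Measurable G := (hg.pow_const _).mul (hw.pow_const _)
  have hconj : (r / (r - 1)).HolderConjugate r :=
    (Real.HolderConjugate.conjExponent hr).symm
  have holder : ∀ x, (∫⁻ y, k x y * g y ∂μ) ^ r ≤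
      (∫⁻ y, k x y * w y ^ ((s - 1) / (r - 1)) ∂μ) ^ (r - 1) * ∫⁻ y, k x y * G y ∂μ := by
    intro x
    have h1 : ∫⁻ y, k x y * g y ∂μ =
        ∫⁻ y, ((fun y => k x y ^ ((r - 1) / r) * w y ^ ((s - 1) / r)) *
          (fun y => k x y ^ (1 / r) * (g y * w y ^ (-((s - 1) / r))))) y ∂μ := by
      refine lintegral_congr_ae ?_
      filter_upwards [hw0] with y hy
      simp only [Pi.mul_apply]
      have e1 : k x y ^ ((r - 1) / r) * k x y ^ (1 / r) = k x y := by
        rw [← ENNReal.rpow_add_of_nonneg _ _ (by positivity) (by positivity), ← add_div]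
        rw [sub_add_cancel, div_self hr0.ne', ENNReal.rpow_one]
      have e2 : w y ^ ((s - 1) / r) * w y ^ (-((s - 1) / r)) = 1 := by
        rw [← ENNReal.rpow_add _ _ hy.1 hy.2, add_neg_cancel, ENNReal.rpow_zero]
      calc k x y * g y = (k x y ^ ((r - 1) / r) * k x y ^ (1 / r)) * g y *
            (w y ^ ((s - 1) / r) * w y ^ (-((s - 1) / r))) := by rw [e1, e2, mul_one]
        _ = _ := by ring
    have h2 := ENNReal.lintegral_mul_le_Lp_mul_Lq μ hconj
      (f := fun y => k x y ^ ((r - 1) / r) * w y ^ ((s - 1) / r))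
      (g := fun y => k x y ^ (1 / r) * (g y * w y ^ (-((s - 1) / r))))
      (((hkx x).pow_const _).mul (hw.pow_const _)).aemeasurable
      (((hkx x).pow_const _).mul (hg.mul (hw.pow_const _))).aemeasurable
    rw [← h1] at h2
    have e3 : ∀ y, (k x y ^ ((r - 1) / r) * w y ^ ((s - 1) / r)) ^ (r / (r - 1)) =
        k x y * w y ^ ((s - 1) / (r - 1)) := by
      intro y
      rw [ENNReal.mul_rpow_of_nonneg _ _ (by positivity), ← ENNReal.rpow_mul, ← ENNReal.rpow_mul]
      rw [show (r - 1) / r * (r / (r - 1)) = 1 by field_simp, ENNReal.rpow_one]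
      congr 2
      field_simp
    have e4 : ∀ y, (k x y ^ (1 / r) * (g y * w y ^ (-((s - 1) / r)))) ^ r = k x y * G y := by
      intro y
      rw [ENNReal.mul_rpow_of_nonneg _ _ hr0.le, ENNReal.mul_rpow_of_nonneg _ _ hr0.le,
        ← ENNReal.rpow_mul, ← ENNReal.rpow_mul]
      rw [show 1 / r * r = 1 by field_simp, ENNReal.rpow_one,
        show -((s - 1) / r) * r = 1 - s by field_simp; ring]
    simp only [e3, e4] at h2
    refine (ENNReal.rpow_le_rpow h2 hr0.le).trans_eq ?_
    rw [ENNReal.mul_rpow_of_nonneg _ _ hr0.le, ← ENNReal.rpow_mul, ← ENNReal.rpow_mul]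
    rw [show 1 / r * r = 1 by field_simp, ENNReal.rpow_one,
        show 1 / (r / (r - 1)) * r = r - 1 by field_simp]
  calc ∫⁻ x, w x ^ r * (∫⁻ y, k x y * g y ∂μ) ^ r ∂μ
      ≤ ∫⁻ x, B ^ (r - 1) * ∫⁻ y, w x ^ s * (k x y * G y) ∂μ ∂μ := by
        refine lintegral_mono_ae ?_
        filter_upwards [hw0, H1] with x hx hx1
        calc w x ^ r * (∫⁻ y, k x y * g y ∂μ) ^ r
            ≤ w x ^ r * ((B * w x ^ ((s - 1) / (r - 1) - 1)) ^ (r - 1) *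
                ∫⁻ y, k x y * G y ∂μ) := by
              gcongr
              refine (holder x).trans ?_
              gcongr
          _ = B ^ (r - 1) * (w x ^ s * ∫⁻ y, k x y * G y ∂μ) := by
              rw [ENNReal.mul_rpow_of_nonneg _ _ hr1.le, ← ENNReal.rpow_mul]
              have : w x ^ s = w x ^ r * w x ^ (((s - 1) / (r - 1) - 1) * (r - 1)) := by
                rw [← ENNReal.rpow_add _ _ hx.1 hx.2]
                congr 1
                field_simp
                ring
              rw [this]
              ring
          _ = _ := by congr 1; exact (lintegral_const_mul _ ((hkx x).mul hGm)).symm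
    _ = B ^ (r - 1) * ∫⁻ x, ∫⁻ y, w x ^ s * (k x y * G y) ∂μ ∂μ := by
        rw [lintegral_const_mul]
        exact Measurable.lintegral_prod_right'
          (f := fun q : X × X => w q.1 ^ s * (k q.1 q.2 * G q.2))
          (((hw.comp measurable_fst).pow_const _).mul (hk.mul (hGm.comp measurable_snd)))
    _ = B ^ (r - 1) * ∫⁻ y, ∫⁻ x, w x ^ s * (k x y * G y) ∂μ ∂μ := by
        rw [lintegral_lintegral_swap]
        exact (((hw.comp measurable_fst).pow_const _).mul
          (hk.mul (hGm.comp measurable_snd))).aemeasurable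
    _ ≤ B ^ (r - 1) * ∫⁻ y, B * g y ^ r ∂μ := by
        gcongr B ^ (r - 1) * ?_
        refine lintegral_mono_ae ?_
        filter_upwards [hw0, H2] with y hy hy2
        calc ∫⁻ x, w x ^ s * (k x y * G y) ∂μ = ∫⁻ x, G y * (k x y * w x ^ s) ∂μ := by
              congr 1; funext x; ring
          _ = G y * ∫⁻ x, k x y * w x ^ s ∂μ := by
              rw [lintegral_const_mul]
              exact (hk.comp measurable_prodMk_right).mul (hw.pow_const _)
          _ ≤ G y * (B * w y ^ (s - 1)) := by gcongr
          _ = B * g y ^ r * (w y ^ (1 - s) * w y ^ (s - 1)) := by rw [hG]; ring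
          _ = _ := by
              rw [← ENNReal.rpow_add _ _ hy.1 hy.2]; simp
    _ = _ := by
        rw [lintegral_const_mul _ (hg.pow_const _), ← mul_assoc]
        congr 1
        nth_rewrite 2 [← ENNReal.rpow_one B]
        rw [← ENNReal.rpow_add_of_nonneg _ _ hr1.le zero_le_one, sub_add_cancel]

/-! ### The weight dominating `b` -/

/-- The Lebesgue differentiation theorem, applied to the measure with density `h`. -/
lemma le_maxFn_ae {d : ℕ} {h : Eu d → ℝ≥0∞} (hh : Measurable h)
    (hfin : ∀ (x : Eu d) (ρ : ℝ), 0 < ρ → ∫⁻ y in ball x ρ, h y ≠ ∞) :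
    ∀ᵐ x, h x ≤ 2 ^ d * maxFn d h x := by
  have : IsLocallyFiniteMeasure (volume.withDensity h) := ⟨fun x =>
    ⟨ball x 1, ball_mem_nhds x one_pos, by
      rw [withDensity_apply _ measurableSet_ball]
      exact (hfin x 1 one_pos).lt_top⟩⟩
  filter_upwards [Besicovitch.ae_tendsto_rnDeriv (volume.withDensity h) volume,
    Measure.rnDeriv_withDensity volume hh] with x h1 h2
  rw [h2] at h1
  refine le_of_tendsto h1 ?_
  filter_upwards [self_mem_nhdsWithin] with ρ hρ
  have hρ : 0 < ρ := hρ
  rw [withDensity_apply _ measurableSet_closedBall, vol_closedBall x hρ]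
  exact ENNReal.div_le_of_le_mul (closedBall_le_maxFn h x hρ)

lemma ae_zero {d : ℕ} {h : Eu d → ℝ≥0∞} (hh : Measurable h) (x : Eu d)
    (h0 : ∀ ρ : ℝ, 0 < ρ → ∫⁻ y in ball x ρ, h y = 0) : h =ᵐ[volume] 0 := by
  have : ∀ n : ℕ, ∀ᵐ y, y ∈ ball x ((n : ℝ) + 1) → h y = 0 := fun n => by
    rw [← ae_restrict_iff' measurableSet_ball]
    exact (lintegral_eq_zero_iff hh).1 (h0 _ (by positivity))
  filter_upwards [ae_all_iff.2 this] with y hy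
  obtain ⟨n, hn⟩ := exists_nat_gt (dist y x)
  exact hy n (mem_ball.2 (by linarith))

lemma maxFn_ne_zero {d : ℕ} {h : Eu d → ℝ≥0∞} (hh : Measurable h)
    (hne : ¬ h =ᵐ[volume] 0) (x : Eu d) : maxFn d h x ≠ 0 := by
  intro h0
  apply hne
  refine ae_zero hh x fun ρ hρ => ?_
  have := (lintegral_mono_set (f := h) (μ := volume)
    (ball_subset_closedBall (x := x) (ε := ρ))).trans (closedBall_le_maxFn h x hρ)
  simpa [h0] using this

/-- The Morrey condition on `b`, rewritten as a bound for integrals of `b ^ p` over balls. -/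
lemma morrey {d : ℕ} {α p A : ℝ} (hp : 0 < p) {b : Eu d → ℝ}
    (H : ∀ ρ : ℝ, 0 < ρ → ∀ c : Eu d, ENNReal.ofReal (ρ ^ α) *
      ((volume (ball c ρ))⁻¹ * ∫⁻ y in ball c ρ, ENNReal.ofReal (b y) ^ p ∂volume) ^ (1 / p) ≤
        ENNReal.ofReal A) {ρ : ℝ} (hρ : 0 < ρ) (c : Eu d) :
    ∫⁻ y in ball c ρ, ENNReal.ofReal (b y) ^ p ≤
      ENNReal.ofReal (A * ρ ^ (-α)) ^ p * volume (ball c ρ) := by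
  have h1 := H ρ hρ c
  have hρα : 0 < ρ ^ α := Real.rpow_pos_of_pos hρ _
  rw [mul_comm, ← ENNReal.le_div_iff_mul_le (Or.inl (by simpa using hρα)) (Or.inl (by simp)),
    ← ENNReal.ofReal_div_of_pos hρα] at h1
  rw [Real.rpow_neg hρ.le, ← div_eq_mul_inv]
  rw [one_div, ENNReal.rpow_inv_le_iff hp, ← ENNReal.div_eq_inv_mul,
    ENNReal.div_le_iff (vol_ball_pos c hρ) (vol_ball_fin c ρ)] at h1
  exact h1

/-- The weight `w = (M h) ^ (1 / p)` inherits the Morrey condition for every exponent `σ < p`, and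
`w ^ σ` is moreover an `A₁` weight. Both bounds are instances of `kolm`, with
`T = (A * ρ ^ (-α)) ^ p` and `T = 2 ^ d * M h (x)` respectively. -/
lemma weight_avg (d : ℕ) {α p σ : ℝ} (hα : 0 < α) (hσ : 0 < σ) (hσp : σ < p) :
    ∃ C : ℝ≥0∞, C ≠ ∞ ∧ ∀ h : Eu d → ℝ≥0∞, Measurable h → ∀ A : ℝ, 0 < A →
      (∀ ρ : ℝ, 0 < ρ → ∀ c, ∫⁻ y in ball c ρ, h y ≤
        ENNReal.ofReal (A * ρ ^ (-α)) ^ p * volume (ball c ρ)) →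
      ∀ (x : Eu d) (ρ : ℝ), 0 < ρ →
        (∫⁻ y in ball x ρ, (maxFn d h y ^ (1 / p)) ^ σ ≤
          C * ENNReal.ofReal ((A * ρ ^ (-α)) ^ σ) * volume (ball x ρ)) ∧
        (∀ w : ℝ, 0 < w → maxFn d h x ^ (1 / p) = ENNReal.ofReal w →
          ∫⁻ y in ball x ρ, (maxFn d h y ^ (1 / p)) ^ σ ≤
            C * ENNReal.ofReal ((min w (A * ρ ^ (-α))) ^ σ) * volume (ball x ρ)) := by
  have hp : 0 < p := hσ.trans hσp
  have hθ : 0 < σ / p := div_pos hσ hp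
  obtain ⟨C, hC, HC⟩ := kolm d hθ ((div_lt_one hp).2 hσp)
  have h2d : (1 : ℝ≥0∞) ≤ (2 ^ d) ^ (σ / p) :=
    ENNReal.one_le_rpow (one_le_pow_of_one_le' (by norm_num) _) hθ
  refine ⟨C * (2 ^ d) ^ (σ / p), ENNReal.mul_ne_top hC
    (ENNReal.rpow_ne_top_of_nonneg hθ.le (by simp)), ?_⟩
  intro h hh A hA hM x ρ hρ
  have hexp : ∀ y, (maxFn d h y ^ (1 / p)) ^ σ = maxFn d h y ^ (σ / p) := fun y => by
    rw [← ENNReal.rpow_mul]; congr 1; ring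
  have hAρ : 0 < A * ρ ^ (-α) := mul_pos hA (Real.rpow_pos_of_pos hρ _)
  have h1 : ∫⁻ y in ball x ρ, (maxFn d h y ^ (1 / p)) ^ σ ≤
      C * (2 ^ d) ^ (σ / p) * ENNReal.ofReal ((A * ρ ^ (-α)) ^ σ) * volume (ball x ρ) := by
    simp_rw [hexp]
    refine (HC h hh x ρ hρ (ENNReal.ofReal (A * ρ ^ (-α)) ^ p) ?_ ?_ ?_).trans ?_
    · simp [ENNReal.rpow_eq_zero_iff, hAρ, hp.not_gt]
    · exact ENNReal.rpow_ne_top_of_nonneg hp.le (by simp)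
    · intro t ht
      refine (hM t (hρ.trans_le ht) x).trans ?_
      have hpow : t ^ (-α) ≤ ρ ^ (-α) :=
        Real.rpow_le_rpow_of_nonpos hρ ht (neg_nonpos.2 hα.le)
      gcongr
    · rw [← ENNReal.rpow_mul, mul_div_cancel₀ _ hp.ne', ← ENNReal.ofReal_rpow_of_pos hAρ]
      gcongr
      exact le_mul_of_one_le_right' h2d
  refine ⟨h1, fun w hw hwx => ?_⟩
  rcases le_total w (A * ρ ^ (-α)) with hle | hle
  · rw [min_eq_left hle]
    simp_rw [hexp]
    have hmx : maxFn d h x = ENNReal.ofReal w ^ p := by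
      rw [← hwx, ← ENNReal.rpow_mul, one_div_mul_cancel hp.ne', ENNReal.rpow_one]
    refine (HC h hh x ρ hρ (2 ^ d * maxFn d h x) ?_ ?_ ?_).trans ?_
    · rw [hmx]
      exact mul_ne_zero (by simp) (by simp [ENNReal.rpow_eq_zero_iff, hw, hp.not_gt])
    · rw [hmx]
      exact ENNReal.mul_ne_top (by simp) (ENNReal.rpow_ne_top_of_nonneg hp.le (by simp))
    · intro t ht
      exact (lintegral_mono_set ball_subset_closedBall).trans
        (closedBall_le_maxFn h x (hρ.trans_le ht))
    · rw [ENNReal.mul_rpow_of_nonneg _ _ hθ.le, hmx, ← ENNReal.rpow_mul,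
        mul_div_cancel₀ _ hp.ne', ← ENNReal.ofReal_rpow_of_pos hw, ← mul_assoc]
  · rw [min_eq_right hle]
    exact h1

/-! ### The trace inequality -/

/-- **Adams's theorem.** Let `0 < α < d`, `1 < r < p < ∞`, `A ≥ 0`, and let `b ≥ 0` satisfy
`sup_{ρ>0} ρ^α sup_B (⨍_B b^p dx)^{1/p} ≤ A` over balls `B` of radius `ρ`. Then there is
`N = N(α,d,r,p)` such that for every `f ∈ L_r(ℝ^d)`:
`∫ b^r (R_α |f|)^r dx ≤ N A^r ∫ |f|^r dx`. -/
theorem adams_theorem (d : ℕ) (hd : 1 ≤ d) (α : ℝ) (hα0 : 0 < α) (hαd : α < d)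
    (r p : ℝ) (hr : 1 < r) (hrp : r < p) :
    ∃ N : ℝ, 0 < N ∧
      ∀ (A : ℝ), 0 ≤ A →
        ∀ b : EuclideanSpace ℝ (Fin d) → ℝ, Measurable b → (∀ x, 0 ≤ b x) →
          (∀ ρ : ℝ, 0 < ρ → ∀ c : EuclideanSpace ℝ (Fin d),
            ENNReal.ofReal (ρ ^ α) *
              ((volume (ball c ρ))⁻¹ *
                ∫⁻ y in ball c ρ, ENNReal.ofReal (b y) ^ p ∂volume) ^ (1 / p) ≤
              ENNReal.ofReal A) →
          ∀ f : EuclideanSpace ℝ (Fin d) → ℝ, Measurable f →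
            (∫⁻ x, (‖f x‖₊ : ℝ≥0∞) ^ r ∂volume) < ⊤ →
            (∫⁻ x, ENNReal.ofReal (b x) ^ r *
                rieszPot d α (fun y => |f y|) x ^ r ∂volume) ≤
              ENNReal.ofReal N * ENNReal.ofReal A ^ r *
                ∫⁻ x, (‖f x‖₊ : ℝ≥0∞) ^ r ∂volume := by
  have hp : 0 < p := by linarith
  have hr0 : 0 < r := by linarith
  have hr1 : 0 < r - 1 := by linarith
  -- `s` is taken slightly above `r`, so that both Schur exponents `s` and `(s-1)/(r-1)` lie in `(1, p)`
  obtain ⟨s, hrs, hs⟩ := exists_between (show r < min p (r + (r - 1) ^ 2) from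
    lt_min hrp (by nlinarith))
  obtain ⟨hsp, hs2⟩ := lt_min_iff.1 hs
  have hs1 : 1 < s := hr.trans hrs
  have hq1 : 1 < (s - 1) / (r - 1) := by rw [lt_div_iff₀ hr1]; linarith
  have hqp : (s - 1) / (r - 1) < p := by
    refine lt_trans ?_ hrp
    rw [div_lt_iff₀ hr1]; nlinarith
  set q : ℝ := (s - 1) / (r - 1) with hq
  obtain ⟨C1, hC1, HC1⟩ := weight_avg d hα0 (by linarith) hqp
  obtain ⟨C2, hC2, HC2⟩ := weight_avg d hα0 (by linarith) hsp
  obtain ⟨K1, hK1, HK1⟩ := potential_bound d hα0 hαd hq1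
  obtain ⟨K2, hK2, HK2⟩ := potential_bound d hα0 hαd hs1
  set D : ℝ≥0∞ := K1 * C1 + K2 * C2 with hD
  have hDt : D ≠ ∞ := ENNReal.add_ne_top.2 ⟨ENNReal.mul_ne_top hK1 hC1, ENNReal.mul_ne_top hK2 hC2⟩
  set c : ℝ≥0∞ := (2 ^ d) ^ (1 / p) with hc
  have hct : c ≠ ∞ := ENNReal.rpow_ne_top_of_nonneg (by positivity) (by simp)
  have hNt : c ^ r * D ^ r ≠ ∞ := ENNReal.mul_ne_top
    (ENNReal.rpow_ne_top_of_nonneg hr0.le hct) (ENNReal.rpow_ne_top_of_nonneg hr0.le hDt)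
  refine ⟨(c ^ r * D ^ r).toReal + 1, by positivity, ?_⟩
  intro A hA b hb hb0 HM f hf hfr
  have hMor := fun (ρ : ℝ) (hρ : 0 < ρ) (x : Eu d) => morrey hp HM hρ x
  set h : Eu d → ℝ≥0∞ := fun y => ENNReal.ofReal (b y) ^ p with hh
  have hhm : Measurable h := hb.ennreal_ofReal.pow_const _
  -- if `b = 0` almost everywhere, the maximal function vanishes and cannot serve as a weight
  by_cases hz : h =ᵐ[volume] 0
  · refine le_of_eq_of_le ?_ zero_le
    rw [← lintegral_zero (μ := (volume : Measure (Eu d)))]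
    refine lintegral_congr_ae ?_
    filter_upwards [hz] with x hx
    have : ENNReal.ofReal (b x) = 0 := by
      have hx' : ENNReal.ofReal (b x) ^ p = 0 := hx
      rcases ENNReal.rpow_eq_zero_iff.1 hx' with h | h
      · exact h.1
      · exact absurd h.2 hp.not_gt
    rw [this, ENNReal.zero_rpow_of_pos hr0, zero_mul]
  -- `A = 0` would force every integral of `b ^ p` over a ball to vanish
  have hApos : 0 < A := by
    rcases hA.eq_or_lt with h0 | h0
    · exfalso
      apply hz
      refine ae_zero hhm 0 fun ρ hρ => ?_
      have := hMor ρ hρ 0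
      simpa [← h0, ENNReal.zero_rpow_of_pos hp] using this
    · exact h0
  set w : Eu d → ℝ≥0∞ := fun x => maxFn d h x ^ (1 / p) with hw
  have hwm : Measurable w := (measurable_maxFn hhm).pow_const _
  have hwfin : ∀ᵐ x, w x ≠ ∞ := by
    have : ∀ n : ℕ, ∀ᵐ y, y ∈ ball (0 : Eu d) ((n : ℝ) + 1) → w y ^ s < ∞ := fun n => by
      rw [← ae_restrict_iff' measurableSet_ball]
      refine ae_lt_top (hwm.pow_const _) (ne_top_of_le_ne_top ?_
        (HC2 h hhm A hApos hMor 0 _ (by positivity)).1)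
      exact ENNReal.mul_ne_top (ENNReal.mul_ne_top hC2 (by simp)) (vol_ball_fin _ _)
    filter_upwards [ae_all_iff.2 this] with y hy
    obtain ⟨n, hn⟩ := exists_nat_gt (dist y 0)
    have h3 := hy n (mem_ball.2 (by linarith))
    intro h4
    rw [h4, ENNReal.top_rpow_of_pos (by linarith)] at h3
    exact lt_irrefl _ h3
  have hw0 : ∀ x, w x ≠ 0 := fun x h0 => by
    rcases ENNReal.rpow_eq_zero_iff.1 h0 with h1 | h1
    · exact maxFn_ne_zero hhm hz x h1.1
    · have : 0 < 1 / p := by positivity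
      linarith [h1.2]
  have hae : ∀ᵐ x, w x ≠ 0 ∧ w x ≠ ∞ := hwfin.mono fun x hx => ⟨hw0 x, hx⟩
  have hbw : ∀ᵐ x, ENNReal.ofReal (b x) ≤ c * w x := by
    filter_upwards [le_maxFn_ae hhm fun x ρ hρ => ne_top_of_le_ne_top (ENNReal.mul_ne_top
      (ENNReal.rpow_ne_top_of_nonneg hp.le (by simp)) (vol_ball_fin x ρ)) (hMor ρ hρ x)] with x hx
    have := ENNReal.rpow_le_rpow hx (show 0 ≤ 1 / p by positivity)
    rwa [hh, ← ENNReal.rpow_mul, mul_one_div_cancel hp.ne', ENNReal.rpow_one,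
      ENNReal.mul_rpow_of_nonneg _ _ (by positivity)] at this
  have pot : ∀ (σ : ℝ) (K C : ℝ≥0∞), 1 < σ → K * C ≤ D →
      (∀ u : Eu d → ℝ≥0∞, Measurable u → ∀ (C : ℝ≥0∞) (x : Eu d) (A w : ℝ),
        0 < A → 0 < w →
        (∀ ρ : ℝ, 0 < ρ → ∫⁻ y in ball x ρ, u y ≤
          C * ENNReal.ofReal ((min w (A * ρ ^ (-α))) ^ σ) * volume (ball x ρ)) →
        ∫⁻ y, ENNReal.ofReal (‖x - y‖ ^ (α - d)) * u y ≤
          K * C * ENNReal.ofReal (A * w ^ (σ - 1))) →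
      (∀ (x : Eu d) (ρ : ℝ), 0 < ρ → ∀ w' : ℝ, 0 < w' → w x = ENNReal.ofReal w' →
          ∫⁻ y in ball x ρ, w y ^ σ ≤
            C * ENNReal.ofReal ((min w' (A * ρ ^ (-α))) ^ σ) * volume (ball x ρ)) →
      ∀ x, w x ≠ 0 ∧ w x ≠ ∞ → ∫⁻ y, ENNReal.ofReal (‖x - y‖ ^ (α - d)) * w y ^ σ ≤
        (D * ENNReal.ofReal A) * w x ^ (σ - 1) := by
    intro σ K C hσ hKC HK HC x hx
    have hx0 : 0 < (w x).toReal := ENNReal.toReal_pos hx.1 hx.2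
    have hxe : w x = ENNReal.ofReal (w x).toReal := (ENNReal.ofReal_toReal hx.2).symm
    refine (HK _ (hwm.pow_const _) C x A (w x).toReal hApos hx0
      fun ρ hρ => HC x ρ hρ _ hx0 hxe).trans ?_
    rw [ENNReal.ofReal_mul hA, ← ENNReal.ofReal_rpow_of_pos hx0, ← hxe, ← mul_assoc]
    gcongr
  have pot1 := pot q K1 C1 hq1 le_self_add HK1
    fun x ρ hρ => (HC1 h hhm A hApos hMor x ρ hρ).2
  have pot2 := pot s K2 C2 hs1 le_add_self HK2
    fun x ρ hρ => (HC2 h hhm A hApos hMor x ρ hρ).2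
  have hsch := schur (volume : Measure (Eu d))
    (k := fun x y => ENNReal.ofReal (‖x - y‖ ^ (α - d)))
    (((measurable_fst.sub measurable_snd).norm.pow_const _).ennreal_ofReal) hwm
    (g := fun y => ENNReal.ofReal |f y|) (by fun_prop) hae hr (D * ENNReal.ofReal A)
    (hae.mono pot1) (hae.mono fun y hy => by
      simp_rw [norm_sub_rev _ y]; exact pot2 y hy)
  have hfe : ∀ x, (‖f x‖₊ : ℝ≥0∞) = ENNReal.ofReal |f x| := fun x => by
    rw [← Real.norm_eq_abs, ofReal_norm]; rfl
  calc ∫⁻ x, ENNReal.ofReal (b x) ^ r * rieszPot d α (fun y => |f y|) x ^ r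
      ≤ ∫⁻ x, c ^ r * (w x ^ r *
          (∫⁻ y, ENNReal.ofReal (‖x - y‖ ^ (α - d)) * ENNReal.ofReal |f y|) ^ r) := by
        refine lintegral_mono_ae ?_
        filter_upwards [hbw] with x hx
        rw [← mul_assoc, ← ENNReal.mul_rpow_of_nonneg c (w x) hr0.le, rieszPot]
        exact mul_le_mul' (ENNReal.rpow_le_rpow hx hr0.le) le_rfl
    _ = c ^ r * ∫⁻ x, (w x ^ r *
          (∫⁻ y, ENNReal.ofReal (‖x - y‖ ^ (α - d)) * ENNReal.ofReal |f y|) ^ r) :=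
        lintegral_const_mul' _ _ (ENNReal.rpow_ne_top_of_nonneg hr0.le hct)
    _ ≤ c ^ r * ((D * ENNReal.ofReal A) ^ r * ∫⁻ y, ENNReal.ofReal |f y| ^ r) := by
        gcongr
    _ = c ^ r * D ^ r * ENNReal.ofReal A ^ r * ∫⁻ x, (‖f x‖₊ : ℝ≥0∞) ^ r := by
        simp_rw [hfe]
        rw [ENNReal.mul_rpow_of_nonneg _ _ hr0.le]
        ring
    _ ≤ _ := by
        gcongr
        rw [← ENNReal.ofReal_toReal hNt]
        exact ENNReal.ofReal_le_ofReal (by rw [ENNReal.toReal_ofReal (by positivity)]; linarith)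
end
end

section
/- Adams's Morrey-space embedding for Riesz potentials: Let d ≥ 1, 0 < α < d, α < β, p ∈ (1,∞), and let r be defined by r(β−α) = pβ. Then there is a constant N, depending only on d, α, β, p, such that for every measurable f ≥ 0 on ℝ^d: ‖R_α f‖_{Ė_{r,β−α}} ≤ N ‖f‖_{Ė_{p,β}}. -/
/-!
The proof is Hedberg's. Let `M` be the centred Hardy–Littlewood maximal operator and
`A = ‖g‖_{Ė_{p,β}}`. Writing the kernel as `|z|^{α-d} = (d-α) ∫_{|z|}^∞ t^{α-d-1} dt` expresses the
Riesz potential through the ball integrals `∫_{B(x,t)} g`, which are at most a constant times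
`t^d M g(x)` by definition and at most a constant times `t^{d-β} A` by Hölder. Using the first bound
for `t ≤ δ` and the second for `t > δ`, and optimising in `δ`, gives the pointwise inequality
`R_α g ≤ C A^{α/β} (M g)^{1-α/β}` (`hedberg`).

Since `r (1 - α/β) = p`, the `r`-th power of the potential is controlled by `A^{r-p} (M g)^p`, and the
theorem reduces to boundedness of `M` on the Morrey space (`morrey_ballMax`). On a ball of radius `ρ`
the part of `g` in the doubled ball is handled by the `L^p` bound for `M`, and averages at scales
larger than `ρ` are at most a constant times `ρ^{-β} A`. The `L^p` bound (`strong_type`) follows from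
the Vitali covering lemma (`weak_type`) by interpolation with the trivial `L^∞` bound.
-/

open MeasureTheory ENNReal Metric

noncomputable section

/-- The homogeneous Morrey norm
`‖g‖_{Ė_{p,β}} = sup { r^β (⨍_B g^p dx)^{1/p} : r > 0, B an open ball of radius r }`
of an `ℝ≥0∞`-valued function. -/
def morreyNormE (d : ℕ) (g : EuclideanSpace ℝ (Fin d) → ℝ≥0∞) (p β : ℝ) : ℝ≥0∞ :=
  ⨆ (c : EuclideanSpace ℝ (Fin d)) (r : ℝ) (_ : 0 < r),
    ENNReal.ofReal (r ^ β) *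
      ((volume (ball c r))⁻¹ * ∫⁻ y in ball c r, g y ^ p ∂volume) ^ (1 / p)

/-! ### The maximal function and its weak type bound -/

/-- The volume of the unit ball of `ℝ^d`. -/
def unitBall (d : ℕ) : ℝ≥0∞ := volume (ball (0 : EuclideanSpace ℝ (Fin d)) 1)

lemma unitBall_ne_top (d : ℕ) : unitBall d ≠ ∞ := measure_ball_lt_top.ne

lemma unitBall_ne_zero (d : ℕ) : unitBall d ≠ 0 := (measure_ball_pos _ _ one_pos).ne'

lemma volume_ball_eq {d : ℕ} (x : EuclideanSpace ℝ (Fin d)) {t : ℝ} (ht : 0 < t) :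
    volume (ball x t) = ENNReal.ofReal (t ^ d) * unitBall d := by
  simpa [unitBall] using Measure.addHaar_ball_of_pos volume x ht

/-- The centred Hardy–Littlewood maximal function, `M g(x) = sup_t t^{-d} ∫_{B(x,t)} g`. It is
normalised by `t^d` in place of the volume of the ball, and the supremum runs over rational radii
only: this makes measurability immediate and costs at most a factor `2^d`
(`lintegral_ball_le_ballMax`). -/
def ballMax (d : ℕ) (g : EuclideanSpace ℝ (Fin d) → ℝ≥0∞) (x : EuclideanSpace ℝ (Fin d)) :
    ℝ≥0∞ :=
  ⨆ q : {q : ℚ // 0 < q},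
    (ENNReal.ofReal (((q : ℚ) : ℝ) ^ d))⁻¹ * ∫⁻ y in ball x ((q : ℚ) : ℝ), g y

lemma measurable_lintegral_ball {d : ℕ} {g : EuclideanSpace ℝ (Fin d) → ℝ≥0∞}
    (hg : Measurable g) :
    Measurable fun z : EuclideanSpace ℝ (Fin d) × ℝ => ∫⁻ y in ball z.1 z.2, g y := by
  have h1 : (fun z : EuclideanSpace ℝ (Fin d) × ℝ => ∫⁻ y in ball z.1 z.2, g y) =
      fun z => ∫⁻ y, {w : (EuclideanSpace ℝ (Fin d) × ℝ) × EuclideanSpace ℝ (Fin d) |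
        dist w.2 w.1.1 < w.1.2}.indicator (fun w => g w.2) (z, y) := by
    funext z
    rw [← lintegral_indicator measurableSet_ball]
    rfl
  rw [h1]
  refine Measurable.lintegral_prod_right' (Measurable.indicator (by fun_prop) ?_)
  exact measurableSet_lt (by fun_prop) (by fun_prop)

lemma measurable_ballMax {d : ℕ} {g : EuclideanSpace ℝ (Fin d) → ℝ≥0∞} (hg : Measurable g) :
    Measurable (ballMax d g) := by
  have h (q : {q : ℚ // 0 < q}) : Measurable fun x : EuclideanSpace ℝ (Fin d) =>
      (ENNReal.ofReal (((q : ℚ) : ℝ) ^ d))⁻¹ * ∫⁻ y in ball x ((q : ℚ) : ℝ), g y :=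
    ((measurable_lintegral_ball hg).comp
      (measurable_id.prodMk (measurable_const (a := ((q : ℚ) : ℝ))))).const_mul _
  unfold ballMax
  exact Measurable.iSup h

lemma lintegral_ball_le_ballMax {d : ℕ} (g : EuclideanSpace ℝ (Fin d) → ℝ≥0∞)
    (x : EuclideanSpace ℝ (Fin d)) {t : ℝ} (ht : 0 < t) :
    ∫⁻ y in ball x t, g y ≤ ENNReal.ofReal ((2 * t) ^ d) * ballMax d g x := by
  obtain ⟨q, hq1, hq2⟩ := exists_rat_btwn (show t < 2 * t by linarith)
  have hq0 : (0 : ℝ) < q := ht.trans hq1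
  have hpos : 0 < (q : ℝ) ^ d := by positivity
  calc ∫⁻ y in ball x t, g y ≤ ∫⁻ y in ball x q, g y :=
        lintegral_mono_set (ball_subset_ball hq1.le)
    _ = ENNReal.ofReal ((q : ℝ) ^ d) * ((ENNReal.ofReal ((q : ℝ) ^ d))⁻¹ *
          ∫⁻ y in ball x q, g y) := by
        rw [← mul_assoc, ENNReal.mul_inv_cancel (by simpa using hpos) ofReal_ne_top, one_mul]
    _ ≤ ENNReal.ofReal ((2 * t) ^ d) * ballMax d g x := by
        gcongr
        exact le_iSup (fun q : {q : ℚ // 0 < q} => (ENNReal.ofReal (((q : ℚ) : ℝ) ^ d))⁻¹ *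
          ∫⁻ y in ball x ((q : ℚ) : ℝ), g y) ⟨q, by exact_mod_cast hq0⟩

/-- The weak type `(1,1)` inequality for the maximal function, by the Vitali covering lemma.
If the integral is finite, the radii of the selected balls are bounded, since `l t^d ≤ ∫ g`. -/
lemma weak_type_s14 {d : ℕ} (hd : 1 ≤ d) (g : EuclideanSpace ℝ (Fin d) → ℝ≥0∞) {l : ℝ}
    (hl : 0 < l) :
    ENNReal.ofReal l * volume {x | ENNReal.ofReal l < ballMax d g x} ≤
      ENNReal.ofReal (5 ^ d) * unitBall d * ∫⁻ y, g y := by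
  have hcpos : ENNReal.ofReal (5 ^ d) * unitBall d ≠ 0 :=
    mul_ne_zero (by simp) (unitBall_ne_zero d)
  rcases eq_or_ne (∫⁻ y, g y) ∞ with hI | hI
  · rw [hI, ENNReal.mul_top hcpos]; exact le_top
  have hS : ∀ x ∈ {x | ENNReal.ofReal l < ballMax d g x}, ∃ t : ℝ, 0 < t ∧
      ENNReal.ofReal (l * t ^ d) ≤ ∫⁻ y in ball x t, g y := by
    intro x hx
    obtain ⟨q, hq⟩ := lt_iSup_iff.1 (show ENNReal.ofReal l < ballMax d g x from hx)
    have hq0 : (0 : ℝ) < (q : ℚ) := by exact_mod_cast q.2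
    refine ⟨(q : ℚ), hq0, ?_⟩
    have hpos : 0 < ((q : ℚ) : ℝ) ^ d := by positivity
    rw [mul_comm, ← div_eq_mul_inv] at hq
    rw [ofReal_mul hl.le]
    exact ((ENNReal.le_div_iff_mul_le (.inl (by simpa using hpos))
      (.inl ofReal_ne_top)).1 hq.le)
  choose! t ht0 ht using hS
  set S := {x | ENNReal.ofReal l < ballMax d g x} with hSdef
  have hR : ∀ x ∈ S, t x ≤ max 1 ((∫⁻ y, g y).toReal / l) := by
    intro x hx
    by_contra! hcon
    have h1 : 1 < t x := (le_max_left _ _).trans_lt hcon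
    have h2 : (∫⁻ y, g y).toReal / l < t x := (le_max_right _ _).trans_lt hcon
    have h3 : t x ≤ t x ^ d := le_self_pow₀ h1.le (by omega)
    have h4 := (ht x hx).trans (setLIntegral_le_lintegral _ _)
    have h5 := (ofReal_le_iff_le_toReal hI).1 h4
    rw [div_lt_iff₀ hl] at h2
    nlinarith
  obtain ⟨u, huS, hud, hu⟩ := Vitali.exists_disjoint_subfamily_covering_enlargement_ball S
    (fun x => x) t _ hR 5 (by norm_num)
  have huc : u.Countable := hud.countable_of_isOpen (fun _ _ => isOpen_ball)
    (fun i hi => nonempty_ball.2 (ht0 i (huS hi)))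
  have hcov : S ⊆ ⋃ b ∈ u, ball b (5 * t b) := by
    intro x hx
    obtain ⟨b, hb, hsub⟩ := hu x hx
    exact Set.mem_biUnion hb (hsub (mem_ball_self (ht0 x hx)))
  calc ENNReal.ofReal l * volume S
      ≤ ENNReal.ofReal l * ∑' b : u, volume (ball (b : EuclideanSpace ℝ (Fin d)) (5 * t b)) := by
        gcongr
        exact (measure_mono hcov).trans (measure_biUnion_le _ huc _)
    _ = ∑' b : u, ENNReal.ofReal (5 ^ d) * unitBall d * ENNReal.ofReal (l * t b ^ d) := by
        rw [← ENNReal.tsum_mul_left]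
        refine tsum_congr fun b => ?_
        have hb := ht0 b (huS b.2)
        rw [volume_ball_eq _ (by positivity), mul_pow, ofReal_mul (by positivity),
          ofReal_mul hl.le]
        ring
    _ ≤ ∑' b : u, ENNReal.ofReal (5 ^ d) * unitBall d *
          ∫⁻ y in ball (b : EuclideanSpace ℝ (Fin d)) (t b), g y := by
        refine ENNReal.tsum_le_tsum fun b => ?_
        gcongr
        exact ht b (huS b.2)
    _ = ENNReal.ofReal (5 ^ d) * unitBall d * ∫⁻ y in ⋃ b ∈ u, ball b (t b), g y := by
        rw [ENNReal.tsum_mul_left, lintegral_biUnion huc (fun _ _ => measurableSet_ball) hud]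
    _ ≤ _ := by
        gcongr
        exact Measure.restrict_le_self

/-! ### The strong type bound for the maximal function -/

lemma lintegral_Ioo_rpow {s b : ℝ} (hs : 0 < s) (hb : 0 ≤ b) :
    ∫⁻ t in Set.Ioo 0 b, ENNReal.ofReal (t ^ (s - 1)) = ENNReal.ofReal (b ^ s / s) := by
  have hi := intervalIntegral.intervalIntegrable_rpow' (a := 0) (b := b) (r := s - 1)
    (by linarith)
  rw [setLIntegral_congr Ioo_ae_eq_Ioc, ← ofReal_integral_eq_lintegral_ofReal
    ((intervalIntegrable_iff_integrableOn_Ioc_of_le hb).1 hi),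
    ← intervalIntegral.integral_of_le hb, integral_rpow (.inl (by linarith))]
  · simp [Real.zero_rpow hs.ne']
  · filter_upwards [ae_restrict_mem measurableSet_Ioc] with t ht
    exact Real.rpow_nonneg ht.1.le _

lemma lintegral_Ioi_rpow {s b : ℝ} (hs : 0 < s) (hb : 0 < b) :
    ∫⁻ t in Set.Ioi b, ENNReal.ofReal (t ^ (-s - 1)) = ENNReal.ofReal (b ^ (-s) / s) := by
  rw [← ofReal_integral_eq_lintegral_ofReal (integrableOn_Ioi_rpow_of_lt (by linarith) hb),
    integral_Ioi_rpow_of_lt (by linarith) hb]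
  · congr 1
    rw [sub_add_cancel, div_neg, neg_div, neg_neg]
  · filter_upwards [ae_restrict_mem measurableSet_Ioi] with t ht
    exact Real.rpow_nonneg (hb.le.trans (le_of_lt ht)) _

/-- The layer cake formula for powers, for a single extended nonnegative number. -/
lemma layer_cake {s : ℝ} (hs : 0 < s) (a : ℝ≥0∞) :
    a ^ s = ENNReal.ofReal s * ∫⁻ t in Set.Ioi (0 : ℝ),
      ENNReal.ofReal (t ^ (s - 1)) * {t : ℝ | ENNReal.ofReal t < a}.indicator 1 t := by
  have key : ∀ b : ℝ, 0 ≤ b → (∫⁻ t in Set.Ioi (0 : ℝ),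
      ENNReal.ofReal (t ^ (s - 1)) * {t : ℝ | ENNReal.ofReal t < ENNReal.ofReal b}.indicator 1 t) =
      ENNReal.ofReal (b ^ s / s) := by
    intro b hb
    rw [← lintegral_Ioo_rpow hs hb, ← lintegral_indicator measurableSet_Ioi,
      ← lintegral_indicator measurableSet_Ioo]
    congr 1
    funext t
    by_cases h0 : 0 < t
    · by_cases h1 : t < b
      · simp [h0, h1, Set.indicator, ofReal_lt_ofReal_iff_of_nonneg h0.le]
      · simp [h0, h1, Set.indicator, ofReal_lt_ofReal_iff_of_nonneg h0.le]
    · simp [h0, Set.indicator]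
  rcases eq_or_ne a ∞ with rfl | ha
  · rw [ENNReal.top_rpow_of_pos hs]
    symm
    have hI : (∫⁻ t in Set.Ioi (0 : ℝ),
      ENNReal.ofReal (t ^ (s - 1)) * {t : ℝ | ENNReal.ofReal t < ∞}.indicator 1 t) = ∞ := by
      refine ENNReal.eq_top_of_forall_nnreal_le fun c => ?_
      have h2 : (c : ℝ≥0∞) = ENNReal.ofReal (((s * c) ^ (1 / s)) ^ s / s) := by
        rw [← Real.rpow_mul (by positivity), one_div_mul_cancel hs.ne', Real.rpow_one,
          mul_div_cancel_left₀ _ hs.ne', ofReal_coe_nnreal]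
      rw [h2, ← key _ (by positivity)]
      gcongr with t
      exact le_top
    rw [hI, ENNReal.mul_top (by simpa using hs)]
  · lift a to NNReal using ha
    have := key a a.2
    rw [ofReal_coe_nnreal] at this
    rw [this, ← ofReal_mul hs.le, mul_div_cancel₀ _ hs.ne', ← ENNReal.coe_rpow_of_nonneg _ hs.le,
      ← NNReal.coe_rpow, ofReal_coe_nnreal]

/-- Truncating `g` at height `l` costs at most `l` times the volume of the unit ball. -/
lemma ballMax_le_add {d : ℕ} {g : EuclideanSpace ℝ (Fin d) → ℝ≥0∞} (hg : Measurable g)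
    (l : ℝ) (x : EuclideanSpace ℝ (Fin d)) :
    ballMax d g x ≤ ballMax d ({y | ENNReal.ofReal l < g y}.indicator g) x +
      ENNReal.ofReal l * unitBall d := by
  refine iSup_le fun q => ?_
  have hq0 : (0 : ℝ) < (q : ℚ) := by exact_mod_cast q.2
  have hpos : 0 < ((q : ℚ) : ℝ) ^ d := by positivity
  have hm : MeasurableSet {y | ENNReal.ofReal l < g y} := measurableSet_lt measurable_const hg
  calc (ENNReal.ofReal (((q : ℚ) : ℝ) ^ d))⁻¹ * ∫⁻ y in ball x ((q : ℚ) : ℝ), g y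
      ≤ (ENNReal.ofReal (((q : ℚ) : ℝ) ^ d))⁻¹ * ∫⁻ y in ball x ((q : ℚ) : ℝ),
          ({y | ENNReal.ofReal l < g y}.indicator g y + ENNReal.ofReal l) := by
        gcongr with y
        by_cases hy : ENNReal.ofReal l < g y
        · simp [Set.indicator, hy]
        · simpa [Set.indicator, hy] using not_lt.1 hy
    _ = (ENNReal.ofReal (((q : ℚ) : ℝ) ^ d))⁻¹ * (∫⁻ y in ball x ((q : ℚ) : ℝ),
          {y | ENNReal.ofReal l < g y}.indicator g y) + ENNReal.ofReal l * unitBall d := by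
        rw [lintegral_add_right _ measurable_const, setLIntegral_const, volume_ball_eq x hq0,
          mul_add]
        congr 1
        rw [mul_left_comm, ← mul_assoc (ENNReal.ofReal _)⁻¹,
          ENNReal.inv_mul_cancel (by simpa using hpos) ofReal_ne_top, one_mul]
    _ ≤ _ := by
        gcongr
        exact le_iSup (fun q : {q : ℚ // 0 < q} => (ENNReal.ofReal (((q : ℚ) : ℝ) ^ d))⁻¹ *
          ∫⁻ y in ball x ((q : ℚ) : ℝ), {y | ENNReal.ofReal l < g y}.indicator g y) q

/-- The Hardy–Littlewood maximal theorem: `M` is bounded on `L^p` for `p > 1`. This is Marcinkiewicz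
interpolation between the weak type `(1,1)` bound and the trivial `L^∞` bound: at level `t` the
weak type bound is applied to the part of `g` above height `t`. -/
lemma strong_type {d : ℕ} (hd : 1 ≤ d) {p : ℝ} (hp : 1 < p) :
    ∃ C : ℝ≥0∞, C ≠ ∞ ∧ ∀ g : EuclideanSpace ℝ (Fin d) → ℝ≥0∞, Measurable g →
      ∫⁻ x, ballMax d g x ^ p ≤ C * ∫⁻ x, g x ^ p := by
  set W : ℝ≥0∞ := unitBall d + 1 with hW
  set K : ℝ≥0∞ := ENNReal.ofReal (5 ^ d) * unitBall d with hK
  have hWt : W ≠ ∞ := by simp [hW, unitBall_ne_top]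
  have hW0 : W ≠ 0 := by simp [hW]
  have hKt : K ≠ ∞ := ENNReal.mul_ne_top ofReal_ne_top (unitBall_ne_top d)
  have hp1 : 0 < p - 1 := by linarith
  have hp0 : 0 < p := by linarith
  have hp1' : ENNReal.ofReal (p - 1) ≠ 0 := by simpa using hp1
  -- rescaling by `W = |B(0,1)| + 1` makes `{M g / W > t}` lie in `{M (g 1_{g > t}) > t}`, so that
  -- no constant enters the truncation height
  refine ⟨W ^ p * (ENNReal.ofReal p * (K * (ENNReal.ofReal (p - 1))⁻¹)), ?_, fun g hg => ?_⟩
  · exact ENNReal.mul_ne_top (ENNReal.rpow_ne_top_of_nonneg hp0.le hWt)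
      (ENNReal.mul_ne_top ofReal_ne_top (ENNReal.mul_ne_top hKt (ENNReal.inv_ne_top.2 hp1')))
  have hM := measurable_ballMax hg
  have hlevel : ∀ t ∈ Set.Ioi (0 : ℝ), ENNReal.ofReal (t ^ (p - 1)) *
      volume {x | ENNReal.ofReal t < ballMax d g x / W} ≤
      K * (ENNReal.ofReal (t ^ (p - 1 - 1)) * ∫⁻ y, {y | ENNReal.ofReal t < g y}.indicator g y) := by
    intro t ht
    have ht : 0 < t := ht
    have hsub : {x | ENNReal.ofReal t < ballMax d g x / W} ⊆
        {x | ENNReal.ofReal t < ballMax d ({y | ENNReal.ofReal t < g y}.indicator g) x} := by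
      intro x hx
      have hx : ENNReal.ofReal t < ballMax d g x / W := hx
      show ENNReal.ofReal t < _
      rw [ENNReal.lt_div_iff_mul_lt (.inl hW0) (.inl hWt), hW, mul_add, mul_one, add_comm] at hx
      exact lt_of_add_lt_add_right (hx.trans_le (ballMax_le_add hg t x))
    have hsplit : ENNReal.ofReal (t ^ (p - 1)) =
        ENNReal.ofReal (t ^ (p - 1 - 1)) * ENNReal.ofReal t := by
      rw [← ofReal_mul (by positivity), ← Real.rpow_add_one ht.ne', sub_add_cancel]
    calc _ ≤ ENNReal.ofReal (t ^ (p - 1 - 1)) * (ENNReal.ofReal t * volume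
          {x | ENNReal.ofReal t < ballMax d ({y | ENNReal.ofReal t < g y}.indicator g) x}) := by
          rw [hsplit, mul_assoc]
          gcongr
      _ ≤ ENNReal.ofReal (t ^ (p - 1 - 1)) *
          (K * ∫⁻ y, {y | ENNReal.ofReal t < g y}.indicator g y) := by
          exact mul_le_mul_right (weak_type_s14 hd _ ht) _
      _ = _ := by ring
  have hdiv : ∀ x, ballMax d g x ^ p = W ^ p * (ballMax d g x / W) ^ p := by
    intro x
    rw [← ENNReal.mul_rpow_of_nonneg _ _ hp0.le, ENNReal.mul_div_cancel hW0 hWt]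
  have hA : MeasurableSet {z : EuclideanSpace ℝ (Fin d) × ℝ |
      ENNReal.ofReal z.2 < ballMax d g z.1 / W} :=
    measurableSet_lt (by fun_prop) ((hM.comp measurable_fst).div_const _)
  have hB : MeasurableSet {z : ℝ × EuclideanSpace ℝ (Fin d) | ENNReal.ofReal z.1 < g z.2} :=
    measurableSet_lt (by fun_prop) (by fun_prop)
  have hinner : ∀ y, ∫⁻ t in Set.Ioi (0 : ℝ), ENNReal.ofReal (t ^ (p - 1 - 1)) *
      {t : ℝ | ENNReal.ofReal t < g y}.indicator 1 t =
      (ENNReal.ofReal (p - 1))⁻¹ * g y ^ (p - 1) := by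
    intro y
    rw [layer_cake hp1 (g y), ← mul_assoc, ENNReal.inv_mul_cancel hp1' ofReal_ne_top, one_mul]
  calc ∫⁻ x, ballMax d g x ^ p
      = W ^ p * ∫⁻ x, (ballMax d g x / W) ^ p := by
        simp_rw [hdiv]
        rw [lintegral_const_mul _ ((hM.div_const _).pow_const _)]
    _ = W ^ p * (ENNReal.ofReal p * ∫⁻ x, ∫⁻ t in Set.Ioi (0 : ℝ), ENNReal.ofReal (t ^ (p - 1)) *
          {z : EuclideanSpace ℝ (Fin d) × ℝ |
            ENNReal.ofReal z.2 < ballMax d g z.1 / W}.indicator 1 (x, t)) := by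
        congr 1
        rw [← lintegral_const_mul' _ _ ofReal_ne_top]
        refine lintegral_congr fun x => ?_
        rw [layer_cake hp0]
        rfl
    _ = W ^ p * (ENNReal.ofReal p * ∫⁻ t in Set.Ioi (0 : ℝ), ENNReal.ofReal (t ^ (p - 1)) *
          volume {x | ENNReal.ofReal t < ballMax d g x / W}) := by
        rw [lintegral_lintegral_swap]
        · congr 2
          refine lintegral_congr fun t => ?_
          rw [lintegral_const_mul' _ _ ofReal_ne_top]
          congr 1
          have hm : MeasurableSet {x | ENNReal.ofReal t < ballMax d g x / W} :=
            measurableSet_lt measurable_const (hM.div_const _)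
          exact lintegral_indicator_one hm
        · refine Measurable.aemeasurable (Measurable.mul (by fun_prop) ?_)
          exact measurable_one.indicator hA
    _ ≤ W ^ p * (ENNReal.ofReal p * ∫⁻ t in Set.Ioi (0 : ℝ), K *
          (ENNReal.ofReal (t ^ (p - 1 - 1)) *
            ∫⁻ y, {y | ENNReal.ofReal t < g y}.indicator g y)) := by
        gcongr 2
        exact setLIntegral_mono' measurableSet_Ioi hlevel
    _ = W ^ p * (ENNReal.ofReal p * (K * ∫⁻ t in Set.Ioi (0 : ℝ), ∫⁻ y,
          ENNReal.ofReal (t ^ (p - 1 - 1)) * {z : ℝ × EuclideanSpace ℝ (Fin d) |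
            ENNReal.ofReal z.1 < g z.2}.indicator (fun z => g z.2) (t, y))) := by
        rw [lintegral_const_mul' _ _ hKt]
        congr 3
        refine lintegral_congr fun t => ?_
        rw [lintegral_const_mul' _ _ ofReal_ne_top]
        rfl
    _ = W ^ p * (ENNReal.ofReal p * (K * ∫⁻ y, g y * ∫⁻ t in Set.Ioi (0 : ℝ),
          ENNReal.ofReal (t ^ (p - 1 - 1)) *
            {t : ℝ | ENNReal.ofReal t < g y}.indicator 1 t)) := by
        rw [lintegral_lintegral_swap]
        · congr 3
          refine lintegral_congr fun y => ?_
          rw [← lintegral_const_mul]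
          · refine lintegral_congr fun t => ?_
            by_cases h : ENNReal.ofReal t < g y
            · simp [Set.indicator, h, mul_comm]
            · simp [Set.indicator, h]
          · refine Measurable.mul (by fun_prop) (measurable_one.indicator ?_)
            exact measurableSet_lt (by fun_prop) measurable_const
        · refine Measurable.aemeasurable (Measurable.mul (by fun_prop) ?_)
          exact (hg.comp measurable_snd).indicator hB
    _ = W ^ p * (ENNReal.ofReal p * (K * ((ENNReal.ofReal (p - 1))⁻¹ * ∫⁻ y, g y ^ p))) := by
        rw [← lintegral_const_mul _ (hg.pow_const _)]
        congr 3
        refine lintegral_congr fun y => ?_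
        rw [hinner, mul_left_comm]
        congr 1
        nth_rewrite 1 [← ENNReal.rpow_one (g y)]
        rw [← ENNReal.rpow_add_of_nonneg _ _ zero_le_one hp1.le]
        congr 1
        ring
    _ = _ := by ring

/-! ### Morrey bounds for averages and for the maximal function -/

lemma lintegral_ball_rpow_le {d : ℕ} (g : EuclideanSpace ℝ (Fin d) → ℝ≥0∞) {p : ℝ} (β : ℝ)
    (hp : 0 < p) (c : EuclideanSpace ℝ (Fin d)) {t : ℝ} (ht : 0 < t) :
    ∫⁻ y in ball c t, g y ^ p ≤
      volume (ball c t) * (ENNReal.ofReal (t ^ (-β)) * morreyNormE d g p β) ^ p := by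
  have hv0 : volume (ball c t) ≠ 0 := (measure_ball_pos _ _ ht).ne'
  have hvt : volume (ball c t) ≠ ∞ := measure_ball_lt_top.ne
  set X := (volume (ball c t))⁻¹ * ∫⁻ y in ball c t, g y ^ p with hX
  have h1 : ENNReal.ofReal (t ^ β) * X ^ (1 / p) ≤ morreyNormE d g p β :=
    le_iSup_of_le c (le_iSup_of_le t (le_iSup_of_le ht le_rfl))
  have h2 : X ^ (1 / p) ≤ ENNReal.ofReal (t ^ (-β)) * morreyNormE d g p β := by
    calc X ^ (1 / p) = ENNReal.ofReal (t ^ (-β)) * (ENNReal.ofReal (t ^ β) * X ^ (1 / p)) := by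
          rw [← mul_assoc, ← ofReal_mul (by positivity), ← Real.rpow_add ht]
          simp
      _ ≤ _ := by gcongr
  have h3 : X ≤ (ENNReal.ofReal (t ^ (-β)) * morreyNormE d g p β) ^ p := by
    rw [one_div] at h2
    exact (ENNReal.rpow_inv_le_iff hp).1 h2
  calc ∫⁻ y in ball c t, g y ^ p = volume (ball c t) * X := by
        rw [hX, ← mul_assoc, ENNReal.mul_inv_cancel hv0 hvt, one_mul]
    _ ≤ _ := by gcongr

/-- Hölder's inequality turns the Morrey norm into a decay bound for averages,
`⨍_{B(c,t)} g ≤ t^{-β} ‖g‖_{Ė_{p,β}}`. -/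
lemma lintegral_ball_le {d : ℕ} {g : EuclideanSpace ℝ (Fin d) → ℝ≥0∞} (hg : Measurable g)
    {p : ℝ} (β : ℝ) (hp : 1 < p) (c : EuclideanSpace ℝ (Fin d)) {t : ℝ} (ht : 0 < t) :
    ∫⁻ y in ball c t, g y ≤
      volume (ball c t) * (ENNReal.ofReal (t ^ (-β)) * morreyNormE d g p β) := by
  have hp0 : 0 < p := by linarith
  have hv0 : volume (ball c t) ≠ 0 := (measure_ball_pos _ _ ht).ne'
  have hvt : volume (ball c t) ≠ ∞ := measure_ball_lt_top.ne
  have hpq := Real.HolderConjugate.conjExponent hp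
  set q := p.conjExponent
  set Y := ENNReal.ofReal (t ^ (-β)) * morreyNormE d g p β with hY
  calc ∫⁻ y in ball c t, g y = ∫⁻ y in ball c t, (g * (fun _ => 1 : EuclideanSpace ℝ (Fin d) → ℝ≥0∞)) y := by simp
    _ ≤ (∫⁻ y in ball c t, g y ^ p) ^ (1 / p) * (∫⁻ y in ball c t, (1 : ℝ≥0∞) ^ q) ^ (1 / q) :=
        ENNReal.lintegral_mul_le_Lp_mul_Lq _ hpq hg.aemeasurable aemeasurable_const
    _ ≤ (volume (ball c t) * Y ^ p) ^ (1 / p) * volume (ball c t) ^ (1 / q) := by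
        gcongr
        · exact lintegral_ball_rpow_le g β hp0 c ht
        · exact div_nonneg zero_le_one hpq.symm.nonneg
        · simp
    _ = volume (ball c t) * Y := by
        rw [ENNReal.mul_rpow_of_nonneg _ _ (by positivity), ← ENNReal.rpow_mul,
          mul_one_div_cancel hp0.ne', ENNReal.rpow_one, mul_right_comm,
          ← ENNReal.rpow_add _ _ hv0 hvt, one_div, one_div, hpq.inv_add_inv_eq_one,
          ENNReal.rpow_one]

/-- Localisation of the maximal function on `B(c,ρ)`: a ball of radius at most `ρ` centred in
`B(c,ρ)` only sees `g` on `B(c,2ρ)`, while averages over larger balls are controlled by the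
Morrey norm. -/
lemma ballMax_le_local {d : ℕ} {g : EuclideanSpace ℝ (Fin d) → ℝ≥0∞} (hg : Measurable g)
    {p β : ℝ} (hp : 1 < p) (hβ : 0 < β) (c : EuclideanSpace ℝ (Fin d)) {ρ : ℝ} (hρ : 0 < ρ)
    {x : EuclideanSpace ℝ (Fin d)} (hx : x ∈ ball c ρ) :
    ballMax d g x ≤ ballMax d ((ball c (2 * ρ)).indicator g) x +
      unitBall d * (ENNReal.ofReal (ρ ^ (-β)) * morreyNormE d g p β) := by
  refine iSup_le fun q => ?_
  have hq0 : (0 : ℝ) < (q : ℚ) := by exact_mod_cast q.2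
  have hpos : 0 < ((q : ℚ) : ℝ) ^ d := by positivity
  rcases le_or_gt ((q : ℚ) : ℝ) ρ with hq | hq
  · refine le_trans ?_ le_self_add
    have hsub : ball x ((q : ℚ) : ℝ) ⊆ ball c (2 * ρ) := by
      refine ball_subset_ball' ?_
      have := mem_ball.1 hx
      linarith
    have : ∫⁻ y in ball x ((q : ℚ) : ℝ), g y =
        ∫⁻ y in ball x ((q : ℚ) : ℝ), (ball c (2 * ρ)).indicator g y :=
      setLIntegral_congr_fun measurableSet_ball fun y hy =>
        (Set.indicator_of_mem (hsub hy) g).symm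
    rw [this]
    exact le_iSup (fun q : {q : ℚ // 0 < q} => (ENNReal.ofReal (((q : ℚ) : ℝ) ^ d))⁻¹ *
          ∫⁻ y in ball x ((q : ℚ) : ℝ), (ball c (2 * ρ)).indicator g y) q
  · refine le_trans ?_ le_add_self
    calc _ ≤ (ENNReal.ofReal (((q : ℚ) : ℝ) ^ d))⁻¹ * (volume (ball x ((q : ℚ) : ℝ)) *
            (ENNReal.ofReal (((q : ℚ) : ℝ) ^ (-β)) * morreyNormE d g p β)) := by
          gcongr
          exact lintegral_ball_le hg β hp x hq0
      _ = unitBall d * (ENNReal.ofReal (((q : ℚ) : ℝ) ^ (-β)) * morreyNormE d g p β) := by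
          rw [volume_ball_eq x hq0, mul_assoc (ENNReal.ofReal _), ← mul_assoc,
            ENNReal.inv_mul_cancel (by simpa using hpos) ofReal_ne_top, one_mul]
      _ ≤ _ := by
          gcongr _ * (ENNReal.ofReal ?_ * _)
          exact Real.rpow_le_rpow_of_nonpos hρ hq.le (by linarith)

/-- The maximal operator is bounded on the Morrey space: on every ball of radius `ρ`, the average
of `(M g)^p` is at most a constant times `(ρ^{-β} ‖g‖_{Ė_{p,β}})^p`. -/
lemma morrey_ballMax {d : ℕ} (hd : 1 ≤ d) {p β : ℝ} (hp : 1 < p) (hβ : 0 < β) :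
    ∃ C : ℝ≥0∞, C ≠ ∞ ∧ ∀ g : EuclideanSpace ℝ (Fin d) → ℝ≥0∞, Measurable g →
      ∀ (c : EuclideanSpace ℝ (Fin d)) (ρ : ℝ), 0 < ρ →
      ∫⁻ x in ball c ρ, ballMax d g x ^ p ≤
        C * (volume (ball c ρ) * (ENNReal.ofReal (ρ ^ (-β)) * morreyNormE d g p β) ^ p) := by
  obtain ⟨C, hC, hstrong⟩ := strong_type hd hp
  have hp0 : 0 < p := by linarith
  refine ⟨2 ^ (p - 1) * (C * ENNReal.ofReal (2 ^ d) + unitBall d ^ p), ?_,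
    fun g hg c ρ hρ => ?_⟩
  · refine ENNReal.mul_ne_top (ENNReal.rpow_ne_top_of_nonneg (by linarith) (by simp))
      (ENNReal.add_ne_top.2 ⟨ENNReal.mul_ne_top hC ofReal_ne_top,
        ENNReal.rpow_ne_top_of_nonneg hp0.le (unitBall_ne_top d)⟩)
  set Y := ENNReal.ofReal (ρ ^ (-β)) * morreyNormE d g p β with hY
  have hgi : Measurable ((ball c (2 * ρ)).indicator g) := hg.indicator measurableSet_ball
  have hnear : ∫⁻ x, ballMax d ((ball c (2 * ρ)).indicator g) x ^ p ≤
      C * (ENNReal.ofReal (2 ^ d) * volume (ball c ρ) * Y ^ p) := by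
    refine (hstrong _ hgi).trans ?_
    gcongr
    have h1 : ∫⁻ x, (ball c (2 * ρ)).indicator g x ^ p = ∫⁻ x in ball c (2 * ρ), g x ^ p := by
      rw [← lintegral_indicator measurableSet_ball]
      refine lintegral_congr fun x => ?_
      by_cases hx : x ∈ ball c (2 * ρ) <;> simp only [Set.indicator, hx, if_true, if_false]
      exact ENNReal.zero_rpow_of_pos hp0
    rw [h1]
    refine (lintegral_ball_rpow_le g β hp0 c (by positivity)).trans ?_
    have hv : volume (ball c (2 * ρ)) = ENNReal.ofReal (2 ^ d) * volume (ball c ρ) := by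
      rw [volume_ball_eq c hρ, volume_ball_eq c (by positivity), mul_pow,
        ofReal_mul (by positivity), mul_assoc]
    rw [hv, hY]
    gcongr _ * (ENNReal.ofReal ?_ * _) ^ p
    exact Real.rpow_le_rpow_of_nonpos hρ (by linarith) (by linarith)
  calc ∫⁻ x in ball c ρ, ballMax d g x ^ p
      ≤ ∫⁻ x in ball c ρ, 2 ^ (p - 1) *
          (ballMax d ((ball c (2 * ρ)).indicator g) x ^ p + (unitBall d * Y) ^ p) := by
        refine setLIntegral_mono' measurableSet_ball fun x hx => ?_
        refine le_trans ?_ (ENNReal.rpow_add_le_mul_rpow_add_rpow _ _ hp.le)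
        gcongr
        exact ballMax_le_local hg hp hβ c hρ hx
    _ = 2 ^ (p - 1) * ((∫⁻ x in ball c ρ, ballMax d ((ball c (2 * ρ)).indicator g) x ^ p) +
          (unitBall d * Y) ^ p * volume (ball c ρ)) := by
        rw [lintegral_const_mul', lintegral_add_right _ measurable_const, setLIntegral_const]
        exact ENNReal.rpow_ne_top_of_nonneg (by linarith) (by simp)
    _ ≤ 2 ^ (p - 1) * (C * (ENNReal.ofReal (2 ^ d) * volume (ball c ρ) * Y ^ p) +
          (unitBall d * Y) ^ p * volume (ball c ρ)) := by
        gcongr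
        exact (setLIntegral_le_lintegral _ _).trans hnear
    _ = _ := by
        rw [ENNReal.mul_rpow_of_nonneg (unitBall d) Y hp0.le]
        clear_value Y
        ring

/-! ### Hedberg's pointwise inequality -/

lemma rpow_norm_le {s b : ℝ} (hs : 0 < s) (hb : 0 ≤ b) :
    ENNReal.ofReal (b ^ (-s)) ≤ ENNReal.ofReal s * ∫⁻ t in Set.Ioi (0 : ℝ),
      ENNReal.ofReal (t ^ (-s - 1)) * (Set.Ioi b).indicator 1 t := by
  rcases hb.eq_or_lt with rfl | hb
  -- the junk value `0 ^ (-s) = 0` makes the bound trivial on the diagonal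
  · simp [Real.zero_rpow (neg_ne_zero.2 hs.ne')]
  have h : ∫⁻ t in Set.Ioi (0 : ℝ), ENNReal.ofReal (t ^ (-s - 1)) * (Set.Ioi b).indicator 1 t =
      ∫⁻ t in Set.Ioi b, ENNReal.ofReal (t ^ (-s - 1)) := by
    rw [← lintegral_indicator measurableSet_Ioi, ← lintegral_indicator measurableSet_Ioi]
    refine lintegral_congr fun t => ?_
    by_cases h : b < t
    · simp [Set.indicator, h, hb.trans h]
    · simp [Set.indicator, h]
  rw [h, lintegral_Ioi_rpow hs hb, ← ofReal_mul hs.le, mul_div_cancel₀ _ hs.ne']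

/-- The Riesz potential as a superposition of ball integrals: write the kernel as
`|z|^{α-d} = (d-α) ∫_{|z|}^∞ t^{α-d-1} dt` and exchange the integrals. -/
lemma riesz_le_lintegral {d : ℕ} {α : ℝ} (hαd : α < d)
    {g : EuclideanSpace ℝ (Fin d) → ℝ≥0∞} (hg : Measurable g) (x : EuclideanSpace ℝ (Fin d)) :
    ∫⁻ y, ENNReal.ofReal (‖x - y‖ ^ (α - d)) * g y ≤
      ENNReal.ofReal (d - α) * ∫⁻ t in Set.Ioi (0 : ℝ),
        ENNReal.ofReal (t ^ (α - d - 1)) * ∫⁻ y in ball x t, g y := by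
  have hs : 0 < d - α := by linarith
  have hA : MeasurableSet {z : EuclideanSpace ℝ (Fin d) × ℝ | ‖x - z.1‖ < z.2} :=
    measurableSet_lt (by fun_prop) (by fun_prop)
  calc ∫⁻ y, ENNReal.ofReal (‖x - y‖ ^ (α - d)) * g y
      ≤ ∫⁻ y, ENNReal.ofReal (d - α) * ∫⁻ t in Set.Ioi (0 : ℝ),
          ENNReal.ofReal (t ^ (α - d - 1)) *
            ({z : EuclideanSpace ℝ (Fin d) × ℝ | ‖x - z.1‖ < z.2}.indicator 1 (y, t) * g y) := by
        refine lintegral_mono fun y => ?_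
        have h := rpow_norm_le hs (norm_nonneg (x - y))
        rw [neg_sub] at h
        calc _ ≤ _ := mul_le_mul_left h (g y)
          _ = _ := by
            rw [mul_assoc, ← lintegral_mul_const]
            · congr 1
              refine lintegral_congr fun t => ?_
              rw [mul_assoc]
              rfl
            · exact Measurable.mul (by fun_prop) (measurable_one.indicator measurableSet_Ioi)
    _ = ENNReal.ofReal (d - α) * ∫⁻ t in Set.Ioi (0 : ℝ), ∫⁻ y,
          ENNReal.ofReal (t ^ (α - d - 1)) *
            ({z : EuclideanSpace ℝ (Fin d) × ℝ | ‖x - z.1‖ < z.2}.indicator 1 (y, t) * g y) := by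
        rw [lintegral_const_mul' _ _ ofReal_ne_top, lintegral_lintegral_swap]
        refine Measurable.aemeasurable (Measurable.mul (by fun_prop) (Measurable.mul ?_ ?_))
        · exact measurable_one.indicator hA
        · exact hg.comp measurable_fst
    _ = _ := by
        congr 1
        refine lintegral_congr fun t => ?_
        rw [lintegral_const_mul' _ _ ofReal_ne_top, ← lintegral_indicator measurableSet_ball]
        congr 1
        refine lintegral_congr fun y => ?_
        by_cases h : ‖x - y‖ < t
        · simp [Set.indicator, h, dist_eq_norm, norm_sub_rev y x]
        · simp [Set.indicator, h, dist_eq_norm, norm_sub_rev y x]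

/-- Splitting the superposition of ball integrals at radius `δ`: radii below `δ` are bounded
through the maximal function, radii above `δ` through the Morrey norm. -/
lemma riesz_le_add {d : ℕ} {α β p : ℝ} (hα : 0 < α) (hαd : α < d) (hαβ : α < β) (hp : 1 < p)
    {g : EuclideanSpace ℝ (Fin d) → ℝ≥0∞} (hg : Measurable g) (x : EuclideanSpace ℝ (Fin d))
    {δ : ℝ} (hδ : 0 < δ) :
    ∫⁻ y, ENNReal.ofReal (‖x - y‖ ^ (α - d)) * g y ≤
      ENNReal.ofReal (d - α) *
        (ENNReal.ofReal (2 ^ d / α) * (ENNReal.ofReal (δ ^ α) * ballMax d g x) +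
          ENNReal.ofReal (1 / (β - α)) * unitBall d *
            (ENNReal.ofReal (δ ^ (α - β)) * morreyNormE d g p β)) := by
  refine (riesz_le_lintegral hαd hg x).trans ?_
  gcongr
  have hsub : Set.Ioi (0 : ℝ) ⊆ Set.Ioc 0 δ ∪ Set.Ioi δ := Set.Ioi_subset_Ioc_union_Ioi
  refine (lintegral_mono_set hsub).trans ((lintegral_union_le _ _ _).trans (add_le_add ?_ ?_))
  · calc _ ≤ ∫⁻ t in Set.Ioc 0 δ, ENNReal.ofReal (2 ^ d) * ballMax d g x *
          ENNReal.ofReal (t ^ (α - 1)) := by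
          refine setLIntegral_mono' measurableSet_Ioc fun t ht => ?_
          have ht0 : 0 < t := ht.1
          refine (mul_le_mul_right (lintegral_ball_le_ballMax g x ht0) _).trans_eq ?_
          rw [mul_pow, ofReal_mul (by positivity), ← Real.rpow_natCast t d]
          have : ENNReal.ofReal (t ^ (α - 1)) =
              ENNReal.ofReal (t ^ (α - d - 1)) * ENNReal.ofReal (t ^ (d : ℝ)) := by
            rw [← ofReal_mul (by positivity), ← Real.rpow_add ht0]
            congr 2
            ring
          rw [this]
          ring
      _ = _ := by
          rw [lintegral_const_mul _ (by fun_prop), ← setLIntegral_congr Ioo_ae_eq_Ioc,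
            lintegral_Ioo_rpow hα hδ.le, div_eq_mul_inv, div_eq_mul_inv,
            ofReal_mul (by positivity), ofReal_mul (by positivity)]
          ring
  · calc _ ≤ ∫⁻ t in Set.Ioi δ, unitBall d * morreyNormE d g p β *
          ENNReal.ofReal (t ^ (-(β - α) - 1)) := by
          refine setLIntegral_mono' measurableSet_Ioi fun t ht => ?_
          have ht0 : 0 < t := hδ.trans ht
          refine (mul_le_mul_right (lintegral_ball_le hg β hp x ht0) _).trans_eq ?_
          rw [volume_ball_eq x ht0, ← Real.rpow_natCast t d]
          have : ENNReal.ofReal (t ^ (-(β - α) - 1)) = ENNReal.ofReal (t ^ (α - d - 1)) *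
              ENNReal.ofReal (t ^ (d : ℝ)) * ENNReal.ofReal (t ^ (-β)) := by
            rw [← ofReal_mul (by positivity), ← Real.rpow_add ht0, ← ofReal_mul (by positivity),
              ← Real.rpow_add ht0]
            congr 2
            ring
          rw [this]
          ring
      _ = _ := by
          rw [lintegral_const_mul _ (by fun_prop), lintegral_Ioi_rpow (by linarith) hδ,
            div_eq_mul_inv, ofReal_mul (by positivity), neg_sub, one_div]
          ring

/-- Hedberg's inequality `R_α g ≤ C ‖g‖_{Ė_{p,β}}^{α/β} (M g)^{1-α/β}`, from optimising `riesz_le_add`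
in `δ`. -/
lemma hedberg {d : ℕ} {α β p : ℝ} (hα : 0 < α) (hαd : α < d) (hαβ : α < β) (hp : 1 < p) :
    ∃ C : ℝ≥0∞, C ≠ ∞ ∧ ∀ g : EuclideanSpace ℝ (Fin d) → ℝ≥0∞, Measurable g →
      morreyNormE d g p β ≠ ∞ → ∀ x,
      ∫⁻ y, ENNReal.ofReal (‖x - y‖ ^ (α - d)) * g y ≤
        C * (morreyNormE d g p β ^ (α / β) * ballMax d g x ^ (1 - α / β)) := by
  have hβ : 0 < β := hα.trans hαβ
  have hθ : 0 < α / β := by positivity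
  have hθ1 : 0 < 1 - α / β := by rw [sub_pos, div_lt_one hβ]; exact hαβ
  set C₁ := ENNReal.ofReal (2 ^ d / α)
  set C₂ := ENNReal.ofReal (1 / (β - α)) * unitBall d
  have hC₁ : C₁ ≠ ∞ := ofReal_ne_top
  have hC₂ : C₂ ≠ ∞ := ENNReal.mul_ne_top ofReal_ne_top (unitBall_ne_top d)
  have hC : ENNReal.ofReal (d - α) * (C₁ + C₂) ≠ 0 :=
    mul_ne_zero (by simpa using hαd) (by
      have : 0 < 2 ^ d / α := by positivity
      simp [C₁, this])
  refine ⟨ENNReal.ofReal (d - α) * (C₁ + C₂),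
    ENNReal.mul_ne_top ofReal_ne_top (ENNReal.add_ne_top.2 ⟨hC₁, hC₂⟩), fun g hg hA x => ?_⟩
  -- if every ball around `x` carries no mass, the potential vanishes
  have hzero : (∀ t : ℝ, 0 < t → ∫⁻ y in ball x t, g y ≤ 0) →
      ∫⁻ y, ENNReal.ofReal (‖x - y‖ ^ (α - d)) * g y ≤ 0 := by
    intro h
    refine (riesz_le_lintegral hαd hg x).trans ?_
    rw [setLIntegral_congr_fun (g := fun _ => 0) measurableSet_Ioi fun t ht => by
      simp [le_antisymm (h t ht) bot_le]]
    simp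
  rcases eq_or_ne (morreyNormE d g p β) 0 with hA0 | hA0
  · refine (hzero fun t ht => (lintegral_ball_le hg β hp x ht).trans ?_).trans zero_le
    simp [hA0]
  rcases eq_or_ne (ballMax d g x) 0 with hM0 | hM0
  · refine (hzero fun t ht => (lintegral_ball_le_ballMax g x ht).trans ?_).trans zero_le
    simp [hM0]
  rcases eq_or_ne (ballMax d g x) ∞ with hM | hM
  · rw [hM, ENNReal.top_rpow_of_pos hθ1, ENNReal.mul_top, ENNReal.mul_top hC]
    · exact le_top
    · simp [ENNReal.rpow_eq_zero_iff, hA0, hA]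
  have ha : 0 < (morreyNormE d g p β).toReal := ENNReal.toReal_pos hA0 hA
  have hm : 0 < (ballMax d g x).toReal := ENNReal.toReal_pos hM0 hM
  have hAeq := ENNReal.ofReal_toReal hA
  have hMeq := ENNReal.ofReal_toReal hM
  set a := (morreyNormE d g p β).toReal
  set m := (ballMax d g x).toReal
  -- this radius balances the contributions of small and large balls
  have hδ : 0 < (a / m) ^ (1 / β) := by positivity
  refine (riesz_le_add hα hαd hαβ hp hg x hδ).trans_eq ?_
  rw [← hAeq, ← hMeq, ofReal_rpow_of_pos ha, ofReal_rpow_of_pos hm]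
  have e1 : ((a / m) ^ (1 / β)) ^ α * m = a ^ (α / β) * m ^ (1 - α / β) := by
    rw [← Real.rpow_mul (by positivity), Real.div_rpow ha.le hm.le, Real.rpow_sub hm,
      Real.rpow_one, show 1 / β * α = α / β by ring]
    field_simp
  have e2 : ((a / m) ^ (1 / β)) ^ (α - β) * a = a ^ (α / β) * m ^ (1 - α / β) := by
    rw [← Real.rpow_mul (by positivity), Real.div_rpow ha.le hm.le,
      show 1 / β * (α - β) = α / β - 1 by field_simp, Real.rpow_sub hm, Real.rpow_sub ha,
      Real.rpow_sub hm, Real.rpow_one, Real.rpow_one]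
    field_simp
  have ha' : 0 ≤ a ^ (α / β) := by positivity
  rw [← ofReal_mul' hm.le, ← ofReal_mul' ha.le, e1, e2, ← ofReal_mul ha']
  change ENNReal.ofReal (d - α) * (C₁ * _ + C₂ * _) = _
  ring

/-! ### The embedding -/

/-- **Adams's Morrey-space embedding for Riesz potentials.** Let `0 < α < d`, `α < β`,
`p ∈ (1,∞)` and `r(β−α) = pβ`. Then there is `N = N(d,α,β,p)` such that for all `f ≥ 0`:
`‖R_α f‖_{Ė_{r,β−α}} ≤ N ‖f‖_{Ė_{p,β}}`. -/
theorem adams_morrey_embedding (d : ℕ) (hd : 1 ≤ d) (α β : ℝ) (hα0 : 0 < α) (hαd : α < d)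
    (hαβ : α < β) (p r : ℝ) (hp : 1 < p) (hr : r * (β - α) = p * β) :
    ∃ N : ℝ, 0 < N ∧
      ∀ f : EuclideanSpace ℝ (Fin d) → ℝ, Measurable f → (∀ x, 0 ≤ f x) →
        morreyNormE d (rieszPot d α f) r (β - α) ≤
          ENNReal.ofReal N * morreyNormE d (fun y => ENNReal.ofReal (f y)) p β := by
  have hβ : 0 < β := hα0.trans hαβ
  have hp0 : 0 < p := by linarith
  have hs : 0 < β - α := by linarith
  have hr0 : 0 < r := by
    have : 0 < r * (β - α) := hr ▸ by positivity
    exact pos_of_mul_pos_left this hs.le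
  obtain ⟨C₁, hC₁, hR⟩ := hedberg (p := p) hα0 hαd hαβ hp
  obtain ⟨C₂, hC₂, hM⟩ := morrey_ballMax hd hp hβ
  have hNt : C₁ * C₂ ^ (1 / r) ≠ ∞ :=
    ENNReal.mul_ne_top hC₁ (ENNReal.rpow_ne_top_of_nonneg (by positivity) hC₂)
  refine ⟨(C₁ * C₂ ^ (1 / r)).toReal + 1, by positivity, fun f hf _ => ?_⟩
  have hg : Measurable fun y => ENNReal.ofReal (f y) := hf.ennreal_ofReal
  set g : EuclideanSpace ℝ (Fin d) → ℝ≥0∞ := fun y => ENNReal.ofReal (f y) with hgdef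
  set A := morreyNormE d g p β with hAdef
  rcases eq_or_ne A ∞ with hA | hA
  · rw [hA, ENNReal.mul_top (by simp; positivity)]
    exact le_top
  have hN : C₁ * C₂ ^ (1 / r) ≤ ENNReal.ofReal ((C₁ * C₂ ^ (1 / r)).toReal + 1) :=
    (ENNReal.le_ofReal_iff_toReal_le hNt (by positivity)).2 (by linarith)
  refine le_trans ?_ (mul_le_mul_left hN A)
  refine iSup_le fun c => iSup_le fun ρ => iSup_le fun hρ => ?_
  have hv0 : volume (ball c ρ) ≠ 0 := (measure_ball_pos _ _ hρ).ne'
  have hvt : volume (ball c ρ) ≠ ∞ := measure_ball_lt_top.ne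
  have hexp : (1 - α / β) * r = p := by
    field_simp
    linarith
  have hexp' : α / β * r + p = r := by
    rw [← hexp]
    ring
  have hexp'' : -β * p * (1 / r) = -(β - α) := by
    field_simp
    linarith
  have hρpos : ENNReal.ofReal (ρ ^ (-β)) ≠ 0 := by
    have : 0 < ρ ^ (-β) := by positivity
    simpa using this
  have hint : (volume (ball c ρ))⁻¹ * ∫⁻ y in ball c ρ, rieszPot d α f y ^ r ≤
      C₁ ^ r * C₂ * ENNReal.ofReal (ρ ^ (-β)) ^ p * A ^ r := by
    calc _ ≤ (volume (ball c ρ))⁻¹ * ∫⁻ y in ball c ρ,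
          C₁ ^ r * A ^ (α / β * r) * ballMax d g y ^ p := by
          gcongr with y
          calc rieszPot d α f y ^ r
              ≤ (C₁ * (A ^ (α / β) * ballMax d g y ^ (1 - α / β))) ^ r := by
                gcongr
                exact hR g hg hA y
            _ = _ := by
                rw [ENNReal.mul_rpow_of_nonneg _ _ hr0.le, ENNReal.mul_rpow_of_nonneg _ _ hr0.le,
                  ← ENNReal.rpow_mul, ← ENNReal.rpow_mul, hexp, mul_assoc]
      _ ≤ (volume (ball c ρ))⁻¹ * (C₁ ^ r * A ^ (α / β * r) *
          (C₂ * (volume (ball c ρ) * (ENNReal.ofReal (ρ ^ (-β)) * A) ^ p))) := by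
          rw [lintegral_const_mul _ ((measurable_ballMax hg).pow_const _)]
          gcongr
          exact hM g hg c ρ hρ
      _ = (volume (ball c ρ))⁻¹ * volume (ball c ρ) *
          (C₁ ^ r * C₂ * ENNReal.ofReal (ρ ^ (-β)) ^ p * (A ^ (α / β * r) * A ^ p)) := by
          rw [ENNReal.mul_rpow_of_nonneg _ _ hp0.le]
          ring
      _ = _ := by
          rw [ENNReal.inv_mul_cancel hv0 hvt, one_mul,
            ← ENNReal.rpow_add_of_nonneg _ _ (by positivity) hp0.le, hexp']
  calc ENNReal.ofReal (ρ ^ (β - α)) *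
        ((volume (ball c ρ))⁻¹ * ∫⁻ y in ball c ρ, rieszPot d α f y ^ r) ^ (1 / r)
      ≤ ENNReal.ofReal (ρ ^ (β - α)) *
        (C₁ ^ r * C₂ * ENNReal.ofReal (ρ ^ (-β)) ^ p * A ^ r) ^ (1 / r) := by
        gcongr
    _ = ENNReal.ofReal (ρ ^ (β - α)) *
        (C₁ * C₂ ^ (1 / r) * ENNReal.ofReal (ρ ^ (-(β - α))) * A) := by
        have h1r : 0 ≤ 1 / r := by positivity
        rw [ENNReal.mul_rpow_of_nonneg _ _ h1r, ENNReal.mul_rpow_of_nonneg _ _ h1r,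
          ENNReal.mul_rpow_of_nonneg _ _ h1r, ← ENNReal.rpow_mul, ← ENNReal.rpow_mul A,
          mul_one_div_cancel hr0.ne', ENNReal.rpow_one, ENNReal.rpow_one,
          ofReal_rpow_of_pos (by positivity), ofReal_rpow_of_pos (by positivity),
          ← Real.rpow_mul hρ.le, ← Real.rpow_mul hρ.le, hexp'']
    _ = (ENNReal.ofReal (ρ ^ (β - α)) * ENNReal.ofReal (ρ ^ (-(β - α)))) *
        (C₁ * C₂ ^ (1 / r) * A) := by ring
    _ = C₁ * C₂ ^ (1 / r) * A := by
        rw [← ofReal_mul (by positivity), ← Real.rpow_add hρ]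
        simp
end
end

section
/- Interpolation inequality in Morrey spaces: Let d ≥ 1, p ∈ [1,∞) and 0 < β ≤ d/p. There is a constant N = N(d,p,β) such that for every u ∈ C_c^∞(ℝ^d) and every ε ∈ (0,1]: ‖Du‖_{E_{p,β}} ≤ N ( ε ‖D²u‖_{E_{p,β}} + ε^{−1} ‖u‖_{E_{p,β}} ). (This is the whole-space case R = ∞ of the paper's theorem, which allows any u ∈ W²_p(B_R) for R ∈ (0,∞].) -/
/-!
The Morrey norm on the whole space is translation invariant, so the inequality follows by averaging
a pointwise, one-dimensional estimate; no Poincaré inequality and no covering are needed.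

For `v = ε e_i`, the mean value theorem applied to `s ↦ u (x + s v)` on `[0, 1]` and the
fundamental theorem of calculus applied to its derivative give (`enorm_D1_le`)
`|D_i u(x)| ≤ ε⁻¹ (|u(x + v)| + |u(x)|) + ε ∫₀¹ |D²u(x + s v)| ds`.
The `L^p` mean over `B(c, r)` of a translate of `F` by `w` is the mean of `F` over `B(c + w, r)`
(`ballMean_translate`), and by Jensen and Tonelli the mean of an average of translates is bounded by
the supremum of the means over balls of radius `r` (`ballMean_average_le`). Multiplying by `r^β`
bounds the contribution of each `D_i u` by `2 ε⁻¹ ‖u‖ + ε ‖D²u‖`, and summing over `i` gives the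
claim with `N = 2 d`.
-/


open MeasureTheory ENNReal Metric

noncomputable section

/-- The first partial derivative `D_i u` on `ℝ^d` (Euclidean space). -/
def D1 (d : ℕ) (u : EuclideanSpace ℝ (Fin d) → ℝ) (i : Fin d)
    (x : EuclideanSpace ℝ (Fin d)) : ℝ :=
  fderiv ℝ u x (EuclideanSpace.single i 1)

/-- The second partial derivative `D_{ij}u`. -/
def D2 (d : ℕ) (u : EuclideanSpace ℝ (Fin d) → ℝ) (i j : Fin d)
    (x : EuclideanSpace ℝ (Fin d)) : ℝ :=
  fderiv ℝ (fun y => fderiv ℝ u y (EuclideanSpace.single j 1)) x (EuclideanSpace.single i 1)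

/-- The pointwise norm `|Du| = (∑ᵢ |D_i u|²)^{1/2}` of the gradient. -/
def gradNorm (d : ℕ) (u : EuclideanSpace ℝ (Fin d) → ℝ) (x : EuclideanSpace ℝ (Fin d)) : ℝ :=
  Real.sqrt (∑ i, (D1 d u i x) ^ 2)

/-- The pointwise norm `|D²u| = (∑_{i,j} |D_{ij}u|²)^{1/2}` of the Hessian. -/
def hessNorm (d : ℕ) (u : EuclideanSpace ℝ (Fin d) → ℝ) (x : EuclideanSpace ℝ (Fin d)) : ℝ :=
  Real.sqrt (∑ i, ∑ j, (D2 d u i j x) ^ 2)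

/-- The (local) Morrey norm
`‖g‖_{E_{p,β}} = sup { r^β (⨍_B |g|^p dx)^{1/p} : 0 < r ≤ 1, B an open ball of radius r }`. -/
def morreyNormLoc (d : ℕ) (g : EuclideanSpace ℝ (Fin d) → ℝ) (p β : ℝ) : ℝ≥0∞ :=
  ⨆ (c : EuclideanSpace ℝ (Fin d)) (r : ℝ) (_ : 0 < r) (_ : r ≤ 1),
    ENNReal.ofReal (r ^ β) *
      ((volume (ball c r))⁻¹ * ∫⁻ y in ball c r, (‖g y‖₊ : ℝ≥0∞) ^ p ∂volume) ^ (1 / p)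

/-! ### Means over balls -/

/-- The `L^p` mean of a nonnegative function `F` over the ball `B(c, r)`, that is,
`(⨍_B F^p dx)^{1/p}` with values in `[0, ∞]`. -/
def ballMean (d : ℕ) (p : ℝ) (c : EuclideanSpace ℝ (Fin d)) (r : ℝ)
    (F : EuclideanSpace ℝ (Fin d) → ℝ≥0∞) : ℝ≥0∞ :=
  ((volume (ball c r))⁻¹ * ∫⁻ y in ball c r, F y ^ p ∂volume) ^ (1 / p)

section BallMean

variable {d : ℕ} {p : ℝ} {c : EuclideanSpace ℝ (Fin d)} {r : ℝ}
  {F G : EuclideanSpace ℝ (Fin d) → ℝ≥0∞}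

lemma ballMean_mono (hp : 1 ≤ p) (h : ∀ x, F x ≤ G x) :
    ballMean d p c r F ≤ ballMean d p c r G := by
  unfold ballMean
  have hp0 : 0 ≤ p := by linarith
  gcongr with y
  exact h y

lemma ballMean_add_le (hp : 1 ≤ p) (hF : Measurable F) (hG : Measurable G) :
    ballMean d p c r (fun x => F x + G x) ≤ ballMean d p c r F + ballMean d p c r G := by
  have := ENNReal.lintegral_Lp_add_le
    (μ := (volume (ball c r))⁻¹ • volume.restrict (ball c r))
    hF.aemeasurable hG.aemeasurable hp
  simpa [ballMean, lintegral_smul_measure] using this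

lemma ballMean_const_mul (hp : 1 ≤ p) (a : ℝ≥0∞) (hF : Measurable F) :
    ballMean d p c r (fun x => a * F x) = a * ballMean d p c r F := by
  have hp0 : 0 < p := by linarith
  unfold ballMean
  simp_rw [ENNReal.mul_rpow_of_nonneg _ _ hp0.le]
  rw [lintegral_const_mul _ (hF.pow_const p), mul_left_comm,
    ENNReal.mul_rpow_of_nonneg _ _ (by positivity), ← ENNReal.rpow_mul,
    mul_one_div_cancel hp0.ne', ENNReal.rpow_one]

lemma ballMean_sum_le (hp : 1 ≤ p) {ι : Type*} (s : Finset ι)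
    {f : ι → EuclideanSpace ℝ (Fin d) → ℝ≥0∞} (hf : ∀ i, Measurable (f i)) :
    ballMean d p c r (fun x => ∑ i ∈ s, f i x) ≤ ∑ i ∈ s, ballMean d p c r (f i) := by
  classical
  have hp0 : 0 < p := by linarith
  induction s using Finset.induction_on with
  | empty => simp [ballMean, hp0]
  | insert i s hi ih =>
    simp_rw [Finset.sum_insert hi]
    refine (ballMean_add_le hp (hf i) (Finset.measurable_sum s fun j _ => hf j)).trans ?_
    gcongr

/-- Translating the function amounts to translating the ball. This is what makes the Morrey norm
on the whole space translation invariant. -/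
lemma ballMean_translate (v : EuclideanSpace ℝ (Fin d)) (hF : Measurable F) :
    ballMean d p c r (fun x => F (x + v)) = ballMean d p (c + v) r F := by
  have h := (measurePreserving_add_right (volume : Measure (EuclideanSpace ℝ (Fin d)))
    v).setLIntegral_comp_preimage (s := ball (c + v) r) measurableSet_ball (hF.pow_const p)
  rw [Metric.preimage_add_right_ball, add_sub_cancel_right] at h
  unfold ballMean
  rw [h, Measure.addHaar_ball_center volume c, Measure.addHaar_ball_center volume (c + v)]

/-- Jensen's inequality on the unit interval. -/
lemma lintegral_unit_rpow_le (hp : 1 ≤ p) {f : ℝ → ℝ≥0∞} (hf : Measurable f) :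
    (∫⁻ s in Set.Ioc (0 : ℝ) 1, f s) ^ p ≤ ∫⁻ s in Set.Ioc (0 : ℝ) 1, f s ^ p := by
  have hp0 : 0 < p := by linarith
  have : IsProbabilityMeasure (volume.restrict (Set.Ioc (0 : ℝ) 1)) := ⟨by simp⟩
  have h := eLpNorm'_le_eLpNorm'_of_exponent_le one_pos hp
    (volume.restrict (Set.Ioc (0 : ℝ) 1)) hf.aestronglyMeasurable
  simp only [eLpNorm', enorm_eq_self, ENNReal.rpow_one, div_one] at h
  calc _ ≤ ((∫⁻ s in Set.Ioc (0 : ℝ) 1, f s ^ p) ^ (1 / p)) ^ p := by gcongr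
    _ = _ := by rw [← ENNReal.rpow_mul, one_div_mul_cancel hp0.ne', ENNReal.rpow_one]

/-- A form of Minkowski's integral inequality: the average of the translates of `F` along a
segment has `L^p` mean at most the supremum of the `L^p` means of `F` over balls of the same
radius. -/
lemma ballMean_average_le (hp : 1 ≤ p) (v : EuclideanSpace ℝ (Fin d)) (hF : Measurable F) :
    ballMean d p c r (fun x => ∫⁻ s in Set.Ioc (0 : ℝ) 1, F (x + s • v)) ≤
      ⨆ c', ballMean d p c' r F := by
  have hp0 : 0 < p := by linarith
  set T := ⨆ c', ballMean d p c' r F with hT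
  have key : ∀ s : ℝ, (volume (ball c r))⁻¹ * ∫⁻ y in ball c r, F (y + s • v) ^ p ≤ T ^ p := by
    intro s
    have h1 : ballMean d p c r (fun x => F (x + s • v)) ≤ T := by
      rw [ballMean_translate _ hF]
      exact le_iSup (fun c' => ballMean d p c' r F) _
    have h2 := ENNReal.rpow_le_rpow h1 hp0.le
    rwa [ballMean, ← ENNReal.rpow_mul, one_div_mul_cancel hp0.ne', ENNReal.rpow_one] at h2
  have hm : Measurable (Function.uncurry
      fun (y : EuclideanSpace ℝ (Fin d)) (s : ℝ) => F (y + s • v) ^ p) := by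
    refine (hF.comp ?_).pow_const p
    fun_prop
  have hm' : Measurable fun s : ℝ => ∫⁻ y in ball c r, F (y + s • v) ^ p :=
    hm.lintegral_prod_left
  have main : (volume (ball c r))⁻¹ *
      ∫⁻ y in ball c r, (∫⁻ s in Set.Ioc (0 : ℝ) 1, F (y + s • v)) ^ p ≤ T ^ p := by
    calc _ ≤ (volume (ball c r))⁻¹ *
          ∫⁻ y in ball c r, ∫⁻ s in Set.Ioc (0 : ℝ) 1, F (y + s • v) ^ p := by
          gcongr with y
          exact lintegral_unit_rpow_le hp (hF.comp (by fun_prop))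
      _ = ∫⁻ s in Set.Ioc (0 : ℝ) 1,
            (volume (ball c r))⁻¹ * ∫⁻ y in ball c r, F (y + s • v) ^ p := by
          rw [lintegral_lintegral_swap hm.aemeasurable, lintegral_const_mul _ hm']
      _ ≤ ∫⁻ _ in Set.Ioc (0 : ℝ) 1, T ^ p := lintegral_mono fun s => key s
      _ = T ^ p := by simp
  calc _ ≤ (T ^ p) ^ (1 / p) := by unfold ballMean; gcongr
    _ = T := by rw [← ENNReal.rpow_mul, mul_one_div_cancel hp0.ne', ENNReal.rpow_one]

end BallMean

/-! ### Pointwise interpolation -/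

/-- The one-dimensional interpolation inequality on the unit interval: by the mean value theorem
`f' ξ = f 1 - f 0` for some `ξ ∈ (0, 1)`, and `f' ξ - f' 0` is the integral of `f''`. -/
lemma enorm_deriv_zero_le {f f' f'' : ℝ → ℝ} (h1 : ∀ t, HasDerivAt f (f' t) t)
    (h2 : ∀ t, HasDerivAt f' (f'' t) t) (hc : Continuous f'') :
    ‖f' 0‖ₑ ≤ ‖f 1‖ₑ + ‖f 0‖ₑ + ∫⁻ s in Set.Ioc (0 : ℝ) 1, ‖f'' s‖ₑ := by
  obtain ⟨ξ, hξ, hs⟩ := exists_hasDerivAt_eq_slope f f' one_pos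
    (fun t _ => (h1 t).continuousAt.continuousWithinAt) (fun t _ => h1 t)
  have hI := intervalIntegral.integral_eq_sub_of_hasDerivAt (fun t _ => h2 t)
    (hc.intervalIntegrable 0 ξ)
  rw [intervalIntegral.integral_of_le hξ.1.le] at hI
  have he : f' 0 = (f 1 - f 0) - ∫ s in Set.Ioc 0 ξ, f'' s := by
    rw [hI, hs]; ring
  rw [he]
  refine enorm_sub_le.trans ?_
  gcongr
  · exact enorm_sub_le
  · refine (enorm_integral_le_lintegral_enorm _).trans ?_
    exact lintegral_mono_set (Set.Ioc_subset_Ioc_right hξ.2.le)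

lemma abs_D2_le_hessNorm (d : ℕ) (u : EuclideanSpace ℝ (Fin d) → ℝ) (i j : Fin d)
    (x : EuclideanSpace ℝ (Fin d)) : |D2 d u i j x| ≤ hessNorm d u x := by
  refine Real.abs_le_sqrt ?_
  calc _ ≤ ∑ j, (D2 d u i j x) ^ 2 :=
        Finset.single_le_sum (f := fun j => (D2 d u i j x) ^ 2)
          (fun _ _ => sq_nonneg _) (Finset.mem_univ j)
    _ ≤ _ := Finset.single_le_sum (f := fun i => ∑ j, (D2 d u i j x) ^ 2)
          (fun _ _ => Finset.sum_nonneg fun _ _ => sq_nonneg _) (Finset.mem_univ i)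

lemma gradNorm_le_sum (d : ℕ) (u : EuclideanSpace ℝ (Fin d) → ℝ)
    (x : EuclideanSpace ℝ (Fin d)) : gradNorm d u x ≤ ∑ i, |D1 d u i x| := by
  refine Real.sqrt_le_iff.2 ⟨Finset.sum_nonneg fun _ _ => abs_nonneg _, ?_⟩
  simpa using Finset.sum_sq_le_sq_sum_of_nonneg
    (s := Finset.univ) (f := fun i => |D1 d u i x|) (fun _ _ => abs_nonneg _)

lemma contDiff_D1 {d : ℕ} {u : EuclideanSpace ℝ (Fin d) → ℝ} (hu : ContDiff ℝ (⊤ : ℕ∞) u)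
    (i : Fin d) : ContDiff ℝ 1 (D1 d u i) := by
  have h : ContDiff ℝ 1 (fderiv ℝ u) := hu.fderiv_right (by norm_cast)
  exact h.clm_apply contDiff_const

lemma continuous_D2 {d : ℕ} {u : EuclideanSpace ℝ (Fin d) → ℝ} (hu : ContDiff ℝ (⊤ : ℕ∞) u)
    (i j : Fin d) : Continuous (D2 d u i j) :=
  ((contDiff_D1 hu j).continuous_fderiv one_ne_zero).clm_apply continuous_const

lemma continuous_hessNorm {d : ℕ} {u : EuclideanSpace ℝ (Fin d) → ℝ}
    (hu : ContDiff ℝ (⊤ : ℕ∞) u) : Continuous (hessNorm d u) := by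
  have := continuous_D2 hu
  unfold hessNorm
  fun_prop

/-- Pointwise interpolation along the segment from `x` to `x + ε e_i`: the one-dimensional
inequality for `s ↦ u (x + s ε e_i)`, divided by `ε`. -/
lemma enorm_D1_le {d : ℕ} {u : EuclideanSpace ℝ (Fin d) → ℝ} (hu : ContDiff ℝ (⊤ : ℕ∞) u)
    {ε : ℝ} (hε : 0 < ε) (i : Fin d) (x : EuclideanSpace ℝ (Fin d)) :
    ‖D1 d u i x‖ₑ ≤
      ENNReal.ofReal ε⁻¹ * (‖u (x + ε • EuclideanSpace.single i (1 : ℝ))‖ₑ + ‖u x‖ₑ) +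
      ENNReal.ofReal ε * ∫⁻ s in Set.Ioc (0 : ℝ) 1,
        ‖hessNorm d u (x + s • (ε • EuclideanSpace.single i (1 : ℝ)))‖ₑ := by
  set e : EuclideanSpace ℝ (Fin d) := EuclideanSpace.single i (1 : ℝ) with he
  have hline : ∀ t : ℝ, HasDerivAt (fun t : ℝ => x + t • (ε • e)) (ε • e) t := fun t => by
    simpa using ((hasDerivAt_id t).smul_const (ε • e)).const_add x
  have h1 : ∀ t : ℝ, HasDerivAt (fun t : ℝ => u (x + t • (ε • e)))
      (ε * D1 d u i (x + t • (ε • e))) t := fun t => by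
    have := ((hu.differentiable (by simp)) (x + t • (ε • e))).hasFDerivAt.comp_hasDerivAt t
      (hline t)
    rw [map_smul, smul_eq_mul] at this
    exact this
  have h2 : ∀ t : ℝ, HasDerivAt (fun t : ℝ => ε * D1 d u i (x + t • (ε • e)))
      (ε * (ε * D2 d u i i (x + t • (ε • e)))) t := fun t => by
    have := (((contDiff_D1 hu i).differentiable one_ne_zero)
      (x + t • (ε • e))).hasFDerivAt.comp_hasDerivAt t (hline t)
    rw [map_smul, smul_eq_mul] at this
    exact this.const_mul ε
  have hc : Continuous fun t : ℝ => ε * (ε * D2 d u i i (x + t • (ε • e))) := by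
    have := continuous_D2 hu i i
    fun_prop
  have key := enorm_deriv_zero_le h1 h2 hc
  simp only [zero_smul, add_zero, one_smul, enorm_mul, Real.enorm_of_nonneg hε.le] at key
  rw [lintegral_const_mul' _ _ ofReal_ne_top, lintegral_const_mul' _ _ ofReal_ne_top] at key
  have hinv : ENNReal.ofReal ε⁻¹ * ENNReal.ofReal ε = 1 := by
    rw [← ENNReal.ofReal_mul (by positivity), inv_mul_cancel₀ hε.ne', ENNReal.ofReal_one]
  calc ‖D1 d u i x‖ₑ = ENNReal.ofReal ε⁻¹ * (ENNReal.ofReal ε * ‖D1 d u i x‖ₑ) := by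
        rw [← mul_assoc, hinv, one_mul]
    _ ≤ _ := mul_le_mul_right key _
    _ = ENNReal.ofReal ε⁻¹ * (‖u (x + ε • e)‖ₑ + ‖u x‖ₑ) + ENNReal.ofReal ε *
          ∫⁻ s in Set.Ioc (0 : ℝ) 1, ‖D2 d u i i (x + s • (ε • e))‖ₑ := by
        rw [mul_add, ← mul_assoc (ENNReal.ofReal ε⁻¹) (ENNReal.ofReal ε), hinv, one_mul]
    _ ≤ _ := by
        gcongr with s
        rw [enorm_le_iff_norm_le]
        exact (abs_D2_le_hessNorm d u i i _).trans (le_abs_self _)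

/-! ### The interpolation inequality -/

lemma mul_ballMean_le_morreyNormLoc {d : ℕ} (g : EuclideanSpace ℝ (Fin d) → ℝ) (p β : ℝ)
    (c : EuclideanSpace ℝ (Fin d)) {r : ℝ} (hr : 0 < r) (hr1 : r ≤ 1) :
    ENNReal.ofReal (r ^ β) * ballMean d p c r (fun x => ‖g x‖ₑ) ≤ morreyNormLoc d g p β :=
  le_iSup₂_of_le c r (le_iSup₂_of_le hr hr1 le_rfl)

/-- **Interpolation inequality in Morrey spaces.** For `p ∈ [1,∞)` and `0 < β ≤ d/p` there is
`N = N(d,p,β)` such that for every `u ∈ C_c^∞(ℝ^d)` and `ε ∈ (0,1]`: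
`‖Du‖_{E_{p,β}} ≤ N (ε ‖D²u‖_{E_{p,β}} + ε⁻¹ ‖u‖_{E_{p,β}})`. -/
theorem morrey_interpolation (d : ℕ) (hd : 1 ≤ d) (p β : ℝ) (hp : 1 ≤ p)
    (hβ0 : 0 < β) (hβd : β ≤ d / p) :
    ∃ N : ℝ, 0 < N ∧
      ∀ u : EuclideanSpace ℝ (Fin d) → ℝ, ContDiff ℝ (⊤ : ℕ∞) u → HasCompactSupport u →
        ∀ ε : ℝ, 0 < ε → ε ≤ 1 →
          morreyNormLoc d (gradNorm d u) p β ≤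
            ENNReal.ofReal N * (ENNReal.ofReal ε * morreyNormLoc d (hessNorm d u) p β +
              ENNReal.ofReal ε⁻¹ * morreyNormLoc d u p β) := by
  have hdpos : (0 : ℝ) < d := by exact_mod_cast hd
  refine ⟨2 * d, by positivity, fun u hu _ ε hε _ => ?_⟩
  set U := morreyNormLoc d u p β
  set H := morreyNormLoc d (hessNorm d u) p β
  refine iSup₂_le fun c r => iSup₂_le fun hr hr1 => ?_
  change ENNReal.ofReal (r ^ β) * ballMean d p c r (fun x => ‖gradNorm d u x‖ₑ) ≤ _
  have hum : Measurable fun x => ‖u x‖ₑ := hu.continuous.measurable.enorm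
  have hHm : Measurable fun x => ‖hessNorm d u x‖ₑ := (continuous_hessNorm hu).measurable.enorm
  have hgrad : ∀ x, ‖gradNorm d u x‖ₑ ≤ ∑ i, ‖D1 d u i x‖ₑ := fun x => by
    refine le_trans ?_ (enorm_sum_le Finset.univ (fun i => |D1 d u i x|) |>.trans_eq (by simp))
    rw [enorm_le_iff_norm_le, Real.norm_of_nonneg (show 0 ≤ gradNorm d u x from Real.sqrt_nonneg _)]
    exact (gradNorm_le_sum d u x).trans (le_abs_self _)
  have hone : ∀ i, ENNReal.ofReal (r ^ β) * ballMean d p c r (fun x => ‖D1 d u i x‖ₑ) ≤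
      ENNReal.ofReal ε⁻¹ * (U + U) + ENNReal.ofReal ε * H := by
    intro i
    set v : EuclideanSpace ℝ (Fin d) := ε • EuclideanSpace.single i (1 : ℝ)
    have hum' : Measurable fun x => ‖u (x + v)‖ₑ := hum.comp (measurable_add_const v)
    have hIm : Measurable fun x => ∫⁻ s in Set.Ioc (0 : ℝ) 1, ‖hessNorm d u (x + s • v)‖ₑ := by
      refine Measurable.lintegral_prod_right (f := fun x (s : ℝ) => ‖hessNorm d u (x + s • v)‖ₑ) ?_
      exact hHm.comp (g := fun x => ‖hessNorm d u x‖ₑ)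
        (f := fun q : EuclideanSpace ℝ (Fin d) × ℝ => q.1 + q.2 • v) (by fun_prop)
    have hsum : ballMean d p c r (fun x => ‖D1 d u i x‖ₑ) ≤
        ENNReal.ofReal ε⁻¹ * (ballMean d p (c + v) r (fun x => ‖u x‖ₑ) +
          ballMean d p c r (fun x => ‖u x‖ₑ)) +
        ENNReal.ofReal ε * ⨆ c', ballMean d p c' r (fun x => ‖hessNorm d u x‖ₑ) := by
      refine (ballMean_mono hp (enorm_D1_le hu hε i)).trans ?_
      refine (ballMean_add_le hp ((hum'.add hum).const_mul _) (hIm.const_mul _)).trans ?_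
      refine add_le_add ?_ ?_
      · refine (ballMean_const_mul hp _ (hum'.add hum)).trans_le ?_
        gcongr
        refine (ballMean_add_le hp hum' hum).trans_eq ?_
        rw [ballMean_translate (F := fun x => ‖u x‖ₑ) v hum]
      · refine (ballMean_const_mul hp _ hIm).trans_le ?_
        gcongr
        exact ballMean_average_le hp v hHm
    calc _ ≤ ENNReal.ofReal (r ^ β) * _ := mul_le_mul_right hsum _
      _ = ENNReal.ofReal ε⁻¹ *
            (ENNReal.ofReal (r ^ β) * ballMean d p (c + v) r (fun x => ‖u x‖ₑ) +
              ENNReal.ofReal (r ^ β) * ballMean d p c r (fun x => ‖u x‖ₑ)) +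
          ENNReal.ofReal ε * ⨆ c', ENNReal.ofReal (r ^ β) *
            ballMean d p c' r (fun x => ‖hessNorm d u x‖ₑ) := by
          rw [← ENNReal.mul_iSup]; ring
      _ ≤ _ := by
          gcongr
          · exact mul_ballMean_le_morreyNormLoc u p β _ hr hr1
          · exact mul_ballMean_le_morreyNormLoc u p β _ hr hr1
          · exact iSup_le fun c' => mul_ballMean_le_morreyNormLoc _ p β c' hr hr1
  calc _ ≤ ENNReal.ofReal (r ^ β) * ∑ i, ballMean d p c r (fun x => ‖D1 d u i x‖ₑ) := by
        gcongr
        exact (ballMean_mono hp hgrad).trans (ballMean_sum_le hp Finset.univ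
          fun i => (contDiff_D1 hu i).continuous.measurable.enorm)
    _ = ∑ i, ENNReal.ofReal (r ^ β) * ballMean d p c r (fun x => ‖D1 d u i x‖ₑ) :=
        Finset.mul_sum _ _ _
    _ ≤ ∑ _i : Fin d, (ENNReal.ofReal ε⁻¹ * (U + U) + ENNReal.ofReal ε * H) :=
        Finset.sum_le_sum fun i _ => hone i
    _ = d * (ENNReal.ofReal ε⁻¹ * (U + U) + ENNReal.ofReal ε * H) := by simp [mul_add]
    _ ≤ d * (ENNReal.ofReal ε⁻¹ * (U + U) + (ENNReal.ofReal ε * H + ENNReal.ofReal ε * H)) := by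
        gcongr
        exact le_self_add
    _ = _ := by
        rw [ENNReal.ofReal_mul zero_le_two, ENNReal.ofReal_natCast, ENNReal.ofReal_ofNat]
        ring
end
end
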